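/- arXiv:2403.13571 — 10 statements merged into one kernel-verified Lean document; each statement's English description precedes it below -/
import Mathlib

section
/- For all natural numbers g and r, there exists a finite simple graph G whose girth is greater than g and whose chromatic number is greater than r. -/
/-!
The random-graph proof is derandomised into a greedy construction. Put `R = r + 1`. On a vertex
set of size `n = R * m`, edges are added one at a time, joining only vertices that are at distance
more than `g` and both have degree less than a constant `d`. Such an edge creates no cycle of
length at most `g` (`noShort_sup_edge`). Among the admissible edges one is chosen that lies inside
as many as possible of the remaining *large* (size at least `m`) independent sets.

While at most `T = K * n` edges have been added, at most `2 * T / d ≤ m / 2` vertices are saturated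
(have degree `d`), and a ball of radius `g` has at most the constant `b = (d + 1) ^ g` elements. So
each large independent set contains at least `2 * b ^ 2` ordered admissible pairs when `m = 4 * b`,
and by averaging some admissible edge destroys at least a proportion `c = 1 / (8 * R ^ 2)` of the
large independent sets (`greedy_step`). After `T` steps at most `2 ^ n * (1 - c) ^ T < 1` of them
are left, i.e. none, whereas an `r`-colouring would have a colour class of size at least `m`.

The constants are chosen in the order `c`, `K`, `d = 4 * K * R`, `b`, `m`, `n`.
-/

open Finset SimpleGraph

namespace ErdosGirth

variable {V : Type}

/-! ### Short cycles -/

/-- `G` has no cycle of length at most `g`. -/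
def NoShort (G : SimpleGraph V) (g : ℕ) : Prop :=
  ∀ (a : V) (w : G.Walk a a), w.IsCycle → g < w.length

lemma exists_split_of_mem_darts {G : SimpleGraph V} {a b : V} (p : G.Walk a b) (e : G.Dart)
    (he : e ∈ p.darts) :
    ∃ (p₁ : G.Walk a e.fst) (p₂ : G.Walk e.snd b), p = p₁.append (Walk.cons e.adj p₂) := by
  induction p with
  | nil => simp at he
  | cons h p ih =>
    rw [Walk.darts_cons, List.mem_cons] at he
    rcases he with rfl | he
    · exact ⟨Walk.nil, p, rfl⟩
    · obtain ⟨p₁, p₂, rfl⟩ := ih he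
      exact ⟨Walk.cons h p₁, p₂, rfl⟩

/-- Removing from a closed trail its unique passage through the dart `e` leaves a walk that joins
the endpoints of `e` and avoids the edge of `e`. -/
lemma exists_walk_of_mem_darts {G : SimpleGraph V} {a : V} (w : G.Walk a a) (hw : w.IsTrail)
    (e : G.Dart) (he : e ∈ w.darts) :
    ∃ q : G.Walk e.snd e.fst, q.length < w.length ∧ e.edge ∉ q.edges := by
  obtain ⟨p₁, p₂, rfl⟩ := exists_split_of_mem_darts w e he
  refine ⟨p₂.append p₁, ?_, ?_⟩
  · simp only [Walk.length_append, Walk.length_cons]; omega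
  · have h := hw.edges_nodup
    rw [Walk.edges_append, Walk.edges_cons, List.nodup_append, List.nodup_cons] at h
    obtain ⟨-, ⟨h2, -⟩, h3⟩ := h
    rw [Walk.edges_append, List.mem_append]
    rintro (h | h)
    · exact h2 h
    · exact h3 _ h _ List.mem_cons_self rfl

lemma noShort_sup_edge {G : SimpleGraph V} {g : ℕ} (hG : NoShort G g) {u v : V}
    (huv : ∀ q : G.Walk u v, g < q.length) : NoShort (G ⊔ edge u v) g := by
  have key : ∀ x, x ∈ (G ⊔ edge u v).edgeSet → x ≠ s(u, v) → x ∈ G.edgeSet := by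
    intro x
    induction x with | _ x y
    simp only [mem_edgeSet, sup_adj, edge_adj]
    rintro (h | ⟨⟨rfl, rfl⟩ | ⟨rfl, rfl⟩, -⟩) hne
    · exact h
    · exact absurd rfl hne
    · exact absurd Sym2.eq_swap hne
  intro a w hw
  by_cases hmem : s(u, v) ∈ w.edges
  · obtain ⟨e, he, hee⟩ := List.mem_map.1 hmem
    obtain ⟨q, hlen, hq⟩ := exists_walk_of_mem_darts w hw.isTrail e he
    have hq' : ∀ x ∈ q.edges, x ∈ G.edgeSet := fun x hx =>
      key x (q.edges_subset_edgeSet hx) (by rintro rfl; exact hq (hee ▸ hx))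
    have hlen' : (q.transfer G hq').length = q.length := Walk.length_transfer _ _
    rcases (dart_edge_eq_mk'_iff' (d := e) (u := u) (v := v)).1 hee with ⟨h1, h2⟩ | ⟨h1, h2⟩
    · have := huv (((q.transfer G hq').reverse).copy h1 h2)
      simp at this
      omega
    · have := huv ((q.transfer G hq').copy h2 h1)
      simp at this
      omega
  · have hw' : ∀ x ∈ w.edges, x ∈ G.edgeSet := fun x hx =>
      key x (w.edges_subset_edgeSet hx) (by rintro rfl; exact hmem hx)
    have := hG a (w.transfer G hw') (hw.transfer hw')
    rwa [Walk.length_transfer] at this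

/-! ### Degrees and balls -/

variable [Fintype V]

open Classical in
/-- The neighbourhood of `x`, as a finset. -/
noncomputable def nbr (G : SimpleGraph V) (x : V) : Finset V := univ.filter (G.Adj x)

open Classical in
/-- The closed ball of radius `k` around `x`. -/
noncomputable def ball (G : SimpleGraph V) : ℕ → V → Finset V
  | 0, x => {x}
  | k + 1, x => (insert x (nbr G x)).biUnion (ball G k)

lemma card_ball_le {G : SimpleGraph V} {d : ℕ} (hd : ∀ x, (nbr G x).card ≤ d) (k : ℕ) (x : V) :
    (ball G k x).card ≤ (d + 1) ^ k := by
  classical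
  induction k generalizing x with
  | zero => simp [ball]
  | succ k ih =>
    rw [ball, pow_succ']
    refine (card_biUnion_le_card_mul _ _ _ (fun y _ => ih y)).trans ?_
    gcongr
    exact (card_insert_le _ _).trans (Nat.succ_le_succ (hd x))

lemma mem_ball_of_walk {G : SimpleGraph V} (k : ℕ) {x y : V} (p : G.Walk x y)
    (hp : p.length ≤ k) : y ∈ ball G k x := by
  classical
  induction k generalizing x with
  | zero =>
    cases p with
    | nil => simp [ball]
    | cons h p => simp at hp
  | succ k ih =>
    rw [ball, mem_biUnion]
    cases p with
    | nil => exact ⟨y, mem_insert_self _ _, ih Walk.nil (by simp)⟩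
    | cons h p =>
      exact ⟨_, mem_insert_of_mem (by simpa [nbr] using h), ih p (by simpa using hp)⟩

open Classical in
lemma card_nbr_sup_edge_le (G : SimpleGraph V) {u v : V} (huv : u ≠ v) (x : V) :
    (nbr (G ⊔ edge u v) x).card ≤
      (nbr G x).card + ((if x = u then 1 else 0) + (if x = v then 1 else 0)) := by
  have hsub : nbr (G ⊔ edge u v) x ⊆
      nbr G x ∪ ((if x = u then {v} else ∅) ∪ (if x = v then {u} else ∅)) := by
    intro y hy
    simp only [nbr, mem_filter, mem_univ, true_and, sup_adj, edge_adj] at hy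
    simp only [mem_union, nbr, mem_filter, mem_univ, true_and]
    rcases hy with h | ⟨⟨rfl, rfl⟩ | ⟨rfl, rfl⟩, -⟩
    · exact Or.inl h
    · simp
    · simp
  refine (card_le_card hsub).trans ((card_union_le _ _).trans ?_)
  gcongr
  refine (card_union_le _ _).trans ?_
  split_ifs <;> simp

/-! ### The greedy step -/

open Classical in
/-- The independent sets of `G` with at least `m` elements. -/
noncomputable def indep (G : SimpleGraph V) (m : ℕ) : Finset (Finset V) :=
  univ.filter fun S => m ≤ S.card ∧ ∀ x ∈ S, ∀ y ∈ S, ¬ G.Adj x y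

/-- The state of the greedy process after at most `t` edges have been added: girth more than `g`,
maximum degree at most `d` and at most `t` edges (as a bound on the degree sum). -/
structure Good (G : SimpleGraph V) (g d t : ℕ) : Prop where
  noShort : NoShort G g
  deg_le : ∀ x, (nbr G x).card ≤ d
  sum_le : ∑ x, (nbr G x).card ≤ 2 * t

open Classical in
/-- The ordered pairs that may be joined: unsaturated and at distance more than `g`. -/
noncomputable def admissible (G : SimpleGraph V) (g d : ℕ) : Finset (V × V) :=
  univ.filter fun p => (nbr G p.1).card < d ∧ (nbr G p.2).card < d ∧ p.2 ∉ ball G g p.1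

lemma ne_of_mem_admissible {G : SimpleGraph V} {g d : ℕ} {p : V × V}
    (hp : p ∈ admissible G g d) : p.1 ≠ p.2 := by
  intro h
  simp only [admissible, mem_filter] at hp
  exact hp.2.2.2 (h ▸ mem_ball_of_walk g Walk.nil (by simp))

lemma Good.sup_edge {G : SimpleGraph V} {g d t : ℕ} (hG : Good G g d t) {p : V × V}
    (hp : p ∈ admissible G g d) : Good (G ⊔ edge p.1 p.2) g d (t + 1) := by
  classical
  have hne := ne_of_mem_admissible hp
  simp only [admissible, mem_filter] at hp
  obtain ⟨-, h1, h2, h3⟩ := hp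
  refine ⟨noShort_sup_edge hG.noShort ?_, fun x => ?_, ?_⟩
  · intro q
    by_contra! hq
    exact h3 (mem_ball_of_walk g q hq)
  · refine (card_nbr_sup_edge_le G hne x).trans ?_
    have := hG.deg_le x
    split_ifs with ha hb hb
    · exact absurd (ha.symm.trans hb) hne
    · subst ha; omega
    · subst hb; omega
    · omega
  · refine (sum_le_sum fun x _ => card_nbr_sup_edge_le G hne x).trans ?_
    rw [sum_add_distrib, sum_add_distrib]
    have := hG.sum_le
    simp only [sum_ite_eq', mem_univ, if_true]
    omega

open Classical in
/-- Every large set contains many admissible pairs, since it has at least `2 * b` unsaturated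
vertices and balls have at most `b` elements. -/
lemma card_admissible_in {G : SimpleGraph V} {g d t b : ℕ} (hG : Good G g d t)
    (hb : b = (d + 1) ^ g) (hd : 0 < d) (ht : 2 * t ≤ d * (2 * b)) {S : Finset V}
    (hS : 4 * b ≤ S.card) :
    2 * b ^ 2 ≤ ((admissible G g d).filter fun p => p.1 ∈ S ∧ p.2 ∈ S).card := by
  set sat : Finset V := univ.filter fun x => (nbr G x).card = d with hsat
  have hsatcard : sat.card ≤ 2 * b := by
    have h1 : d * sat.card ≤ ∑ x, (nbr G x).card := by
      calc d * sat.card = ∑ x ∈ sat, (nbr G x).card := by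
            rw [sum_congr rfl (fun x hx => (mem_filter.1 hx).2), sum_const, smul_eq_mul, mul_comm]
        _ ≤ _ := sum_le_sum_of_subset (subset_univ _)
    exact Nat.le_of_mul_le_mul_left (h1.trans (hG.sum_le.trans ht)) hd
  set U := S \ sat with hU
  have hUcard : 2 * b ≤ U.card := by
    have : S.card - sat.card ≤ U.card := le_card_sdiff sat S
    omega
  have hUlt : ∀ x ∈ U, x ∈ S ∧ (nbr G x).card < d := by
    intro x hx
    simp only [hU, hsat, mem_sdiff, mem_filter, mem_univ, true_and] at hx
    exact ⟨hx.1, lt_of_le_of_ne (hG.deg_le x) hx.2⟩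
  have hsub : (U.sigma fun x => U \ ball G g x).card ≤
      ((admissible G g d).filter fun p => p.1 ∈ S ∧ p.2 ∈ S).card := by
    refine card_le_card_of_injOn (fun q => (q.1, q.2)) ?_ ?_
    · rintro ⟨x, y⟩ hq
      simp only [coe_sigma, Set.mem_sigma_iff, mem_coe, mem_sdiff] at hq
      simp only [mem_coe, mem_filter, admissible, mem_univ, true_and]
      exact ⟨⟨(hUlt x hq.1).2, (hUlt y hq.2.1).2, hq.2.2⟩, (hUlt x hq.1).1, (hUlt y hq.2.1).1⟩
    · rintro ⟨x, y⟩ - ⟨x', y'⟩ - h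
      simpa using h
  refine le_trans ?_ hsub
  rw [card_sigma]
  calc 2 * b ^ 2 = (2 * b) * b := by ring
    _ ≤ U.card * b := by gcongr
    _ = ∑ _x ∈ U, b := by rw [sum_const, smul_eq_mul]
    _ ≤ _ := by
      refine sum_le_sum fun x _ => ?_
      have h1 := le_card_sdiff (ball G g x) U
      have h2 := card_ball_le hG.deg_le g x
      omega

/-- Double counting of pairs (admissible pair, large independent set containing it): the `n ^ 2`
ordered pairs of vertices share at least `2 * b ^ 2` incidences per large independent set, so the
best pair lies in a proportion at least `2 * b ^ 2 / n ^ 2 = 1 / (8 * R ^ 2)` of these sets. -/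
lemma greedy_step {G : SimpleGraph V} {g d t b R : ℕ} (hG : Good G g d t)
    (hb : b = (d + 1) ^ g) (hd : 0 < d) (ht : 2 * t ≤ d * (2 * b))
    (hV : Fintype.card V = R * (4 * b)) :
    ∃ G' : SimpleGraph V, Good G' g d (t + 1) ∧
      ((indep G' (4 * b)).card : ℝ) ≤ (1 - 1 / (8 * (R : ℝ) ^ 2)) * (indep G (4 * b)).card := by
  classical
  rcases (indep G (4 * b)).eq_empty_or_nonempty with h0 | hne
  · refine ⟨G, ⟨hG.noShort, hG.deg_le, hG.sum_le.trans (by omega)⟩, ?_⟩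
    simp [h0]
  -- `hit p` is the family of large independent sets destroyed by joining the pair `p`.
  let hit : V × V → Finset (Finset V) := fun p =>
    (indep G (4 * b)).filter fun S => p.1 ∈ S ∧ p.2 ∈ S
  have hbpos : 0 < b := by rw [hb]; positivity
  have hcount : (indep G (4 * b)).card * (2 * b ^ 2) ≤ ∑ p ∈ admissible G g d, (hit p).card := by
    have h1 : ∑ p ∈ admissible G g d, (hit p).card = ∑ S ∈ indep G (4 * b),
        ((admissible G g d).filter fun p => p.1 ∈ S ∧ p.2 ∈ S).card :=
      sum_card_bipartiteAbove_eq_sum_card_bipartiteBelow (fun (p : V × V) S => p.1 ∈ S ∧ p.2 ∈ S)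
    rw [h1, ← smul_eq_mul]
    exact card_nsmul_le_sum _ _ _ fun S hS =>
      card_admissible_in hG hb hd ht (mem_filter.1 hS).2.1
  have hadm : (admissible G g d).card ≤ (R * (4 * b)) ^ 2 := by
    refine (card_le_univ _).trans ?_
    rw [Fintype.card_prod, hV, sq]
  have hadmne : (admissible G g d).Nonempty := by
    by_contra h
    rw [not_nonempty_iff_eq_empty] at h
    rw [h, sum_empty] at hcount
    have := hne.card_pos
    have : 0 < (indep G (4 * b)).card * (2 * b ^ 2) := by positivity
    omega
  obtain ⟨p, hp, hmax⟩ := exists_max_image _ (fun p => (hit p).card) hadmne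
  have hhit : (indep G (4 * b)).card ≤ 8 * R ^ 2 * (hit p).card := by
    have h1 : (indep G (4 * b)).card * (2 * b ^ 2) ≤ (R * (4 * b)) ^ 2 * (hit p).card := by
      refine hcount.trans ((sum_le_card_nsmul _ _ _ hmax).trans ?_)
      rw [smul_eq_mul]
      gcongr
    have h2 : (R * (4 * b)) ^ 2 * (hit p).card = 8 * R ^ 2 * (hit p).card * (2 * b ^ 2) := by ring
    rw [h2] at h1
    exact Nat.le_of_mul_le_mul_right h1 (by positivity)
  refine ⟨G ⊔ edge p.1 p.2, hG.sup_edge hp, ?_⟩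
  have hsub : indep (G ⊔ edge p.1 p.2) (4 * b) ⊆ indep G (4 * b) \ hit p := by
    intro S hS
    simp only [indep, mem_filter, mem_univ, true_and] at hS
    simp only [hit, indep, mem_sdiff, mem_filter, mem_univ, true_and, not_and]
    refine ⟨⟨hS.1, fun x hx y hy h => hS.2 x hx y hy (Or.inl h)⟩, fun _ h1 h2 => ?_⟩
    refine hS.2 _ h1 _ h2 (Or.inr ?_)
    rw [edge_adj]
    exact ⟨Or.inl ⟨rfl, rfl⟩, ne_of_mem_admissible hp⟩
  have hcard : (indep (G ⊔ edge p.1 p.2) (4 * b)).card + (hit p).card ≤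
      (indep G (4 * b)).card := by
    have h1 := card_le_card hsub
    have h2 : (indep G (4 * b) \ hit p).card + (hit p).card = (indep G (4 * b)).card :=
      card_sdiff_add_card_eq_card (filter_subset _ _ : hit p ⊆ indep G (4 * b))
    omega
  have hR : 0 < R := by
    rcases Nat.eq_zero_or_pos R with rfl | h
    · have := hne.card_pos
      simp at hhit
      simp [hhit] at this
    · exact h
  have hcard' : ((indep (G ⊔ edge p.1 p.2) (4 * b)).card : ℝ) + (hit p).card ≤
      (indep G (4 * b)).card := by exact_mod_cast hcard
  have hhit' : ((indep G (4 * b)).card : ℝ) ≤ 8 * (R : ℝ) ^ 2 * (hit p).card := by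
    exact_mod_cast hhit
  have hR' : (0 : ℝ) < 8 * (R : ℝ) ^ 2 := by positivity
  have : 1 / (8 * (R : ℝ) ^ 2) * (indep G (4 * b)).card ≤ (hit p).card := by
    rw [one_div, inv_mul_le_iff₀ hR']
    exact hhit'
  linarith

lemma greedy {g d b R T : ℕ} (hb : b = (d + 1) ^ g) (hd : 0 < d) (hT : 2 * T ≤ d * (2 * b))
    (hV : Fintype.card V = R * (4 * b)) (hR : 0 < R) (t : ℕ) (ht : t ≤ T) :
    ∃ G : SimpleGraph V, Good G g d t ∧
      ((indep G (4 * b)).card : ℝ) ≤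
        (1 - 1 / (8 * (R : ℝ) ^ 2)) ^ t * 2 ^ (Fintype.card V) := by
  classical
  induction t with
  | zero =>
    refine ⟨⊥, ⟨fun a w hw => ?_, ?_, ?_⟩, ?_⟩
    · exact absurd hw (isAcyclic_bot w)
    · simp [nbr]
    · simp [nbr]
    · rw [pow_zero, one_mul]
      have := card_le_univ (indep (⊥ : SimpleGraph V) (4 * b))
      rw [Fintype.card_finset] at this
      exact_mod_cast this
  | succ t ih =>
    obtain ⟨G, hG, hc⟩ := ih (by omega)
    obtain ⟨G', hG', hc'⟩ := greedy_step hG hb hd (by omega) hV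
    refine ⟨G', hG', hc'.trans ?_⟩
    rw [pow_succ' _ t, mul_assoc]
    refine mul_le_mul_of_nonneg_left hc ?_
    have h1 : (1 : ℝ) ≤ R := by exact_mod_cast hR
    have h2 : 1 / (8 * (R : ℝ) ^ 2) ≤ 1 := by
      rw [div_le_one (by positivity)]
      nlinarith
    linarith

/-! ### Chromatic number -/

lemma not_colorable {G : SimpleGraph V} {r m : ℕ} (hm : r * m < Fintype.card V)
    (h : indep G m = ∅) : ¬ G.Colorable r := by
  classical
  rintro ⟨C⟩
  obtain ⟨c, hc⟩ := Fintype.exists_lt_card_fiber_of_mul_lt_card (f := C) (n := m) (by simpa using hm)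
  have hmem : (univ.filter fun x => C x = c) ∈ indep G m := by
    simp only [indep, mem_filter, mem_univ, true_and]
    exact ⟨hc.le, fun x hx y hy hxy => C.valid hxy (hx.trans hy.symm)⟩
  simp [h] at hmem

end ErdosGirth

open ErdosGirth in
/-- **Erdős's theorem.** For all natural numbers `g` and `r` there exists a finite graph
whose girth is greater than `g` and whose chromatic number is greater than `r`. -/
theorem erdos_girth_chromatic (g r : ℕ) :
    ∃ (V : Type) (_ : Fintype V) (G : SimpleGraph V),
      (g : ℕ∞) < G.egirth ∧ (r : ℕ∞) < G.chromaticNumber := by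
  set R := r + 1 with hRdef
  have hR1 : (1 : ℝ) ≤ R := by simp [hRdef]
  set q : ℝ := 1 - 1 / (8 * (R : ℝ) ^ 2) with hq
  have hq1 : q < 1 := by
    have : 0 < 1 / (8 * (R : ℝ) ^ 2) := by positivity
    linarith
  have hq0 : 0 ≤ q := by
    have : 1 / (8 * (R : ℝ) ^ 2) ≤ 1 := by
      rw [div_le_one (by positivity)]
      nlinarith
    linarith
  obtain ⟨K, hK⟩ := exists_pow_lt_of_lt_one (show (0 : ℝ) < 1 / 2 by norm_num) hq1
  have hKpos : 0 < K := by
    rcases Nat.eq_zero_or_pos K with rfl | h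
    · norm_num at hK
    · exact h
  set d := 4 * K * R with hd
  have hdpos : 0 < d := by positivity
  set b := (d + 1) ^ g with hb
  have hbpos : 0 < b := by positivity
  set n := R * (4 * b) with hn
  have hnpos : 0 < n := by positivity
  obtain ⟨G, hG, hc⟩ := greedy (V := Fin n) (T := K * n) (R := R) hb hdpos
    (le_of_eq (by rw [hn, hd]; ring)) (by simp [hn]) (by omega) (K * n) le_rfl
  have hempty : indep G (4 * b) = ∅ := by
    rw [← card_eq_zero]
    have hlt : q ^ (K * n) * 2 ^ n < 1 := by
      rw [pow_mul, ← mul_pow]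
      exact pow_lt_one₀ (by positivity) (by linarith) hnpos.ne'
    rw [Fintype.card_fin] at hc
    have : ((indep G (4 * b)).card : ℝ) < 1 := hc.trans_lt hlt
    exact Nat.lt_one_iff.1 (by exact_mod_cast this)
  refine ⟨Fin n, inferInstance, G, ?_, ?_⟩
  · refine lt_of_lt_of_le (b := ((g + 1 : ℕ) : ℕ∞)) (by exact_mod_cast Nat.lt_succ_self g) ?_
    rw [le_egirth]
    intro a w hw
    exact_mod_cast hG.noShort a w hw
  · rw [← not_le, chromaticNumber_le_iff_colorable]
    refine not_colorable ?_ hempty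
    rw [Fintype.card_fin, hn, hRdef]
    exact Nat.mul_lt_mul_of_pos_right (Nat.lt_succ_self r) (by positivity)
end

section
/- For all integers g, k, r ≥ 2, there exists a finite k-uniform hypergraph H such that H contains no cycle of length at most g and H has no proper colouring with r colours. -/
/-!
The hypergraph is built greedily on `n` vertices, one edge at a time, keeping the maximum degree
at most `D`, where `n` and `D` are suitably large numbers depending on `g`, `k`, `r`.

Call a `k`-tuple of vertices *good* for the current edge set `E` if its entries are pairwise at
distance more than `g` in `E` and all have degree less than `D`. Adding the edge spanned by a good
tuple creates no cycle of length at most `g` (`no_cycle_insert`) and keeps the degrees at most `D`.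
Since balls of radius `g` have at most `(1 + D k) ^ g` points and few vertices have degree `D`,
at most `n ^ k / (2 r ^ k)` tuples fail to be good (`card_bad_le`). On the other hand every
`r`-colouring has a colour class of size at least `n / r`, hence at least `n ^ k / r ^ k`
monochromatic tuples, of which at least half are good. With `Q = 2 r ^ k`, averaging gives a
good tuple that is monochromatic for at least a `1 / Q` fraction of the colourings which are
still proper (`greedy_step`). After `n L` steps at most `r ^ n (1 - 1 / Q) ^ (n L)` proper
colourings remain, which is less than one once `r (1 - 1 / Q) ^ L < 1`.
-/

/-- A hypergraph with edge set `E` has a cycle of length `m`: a cyclic sequence of `m`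
distinct edges `e₀, …, e_{m-1}` and `m` distinct vertices `v₀, …, v_{m-1}` with
`vᵢ ∈ eᵢ ∩ e_{i+1}` (indices modulo `m`). -/
def HypergraphCycle {V : Type} (E : Finset (Finset V)) (m : ℕ) : Prop :=
  ∃ (e : ZMod m → Finset V) (v : ZMod m → V),
    Function.Injective e ∧ Function.Injective v ∧
    ∀ i : ZMod m, e i ∈ E ∧ v i ∈ e i ∧ v i ∈ e (i + 1)

open Classical in
/-- The set of vertices at distance at most `s` from `v` in the hypergraph with edge set `E`. -/
noncomputable def hypBall {V : Type} (E : Finset (Finset V)) : ℕ → V → Finset V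
  | 0, v => {v}
  | s + 1, v => hypBall E s v ∪
      (hypBall E s v).biUnion (fun w => (E.filter (fun e => w ∈ e)).biUnion id)

open Classical in
/-- The number of edges of `E` containing `v`. -/
noncomputable def hypDeg {V : Type} (E : Finset (Finset V)) (v : V) : ℕ :=
  (E.filter (fun e => v ∈ e)).card

/-- A tuple of vertices is good if its entries are pairwise at distance more than `g` (so in
particular distinct) and all have degree less than `D`. -/
def GoodTuple {V : Type} (E : Finset (Finset V)) (g D k : ℕ) (x : Fin k → V) : Prop :=
  (∀ i j, i ≠ j → x j ∉ hypBall E g (x i)) ∧ ∀ i, hypDeg E (x i) < D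

open Classical in
/-- The `r`-colourings of `V` for which no edge of `E` is monochromatic. -/
noncomputable def properCols {V : Type} [Fintype V] (E : Finset (Finset V)) (r : ℕ) :
    Finset (V → Fin r) :=
  Finset.univ.filter (fun f => ∀ e ∈ E, ¬ ∀ x ∈ e, ∀ y ∈ e, f x = f y)

lemma self_mem_hypBall {V : Type} (E : Finset (Finset V)) (s : ℕ) (v : V) :
    v ∈ hypBall E s v := by
  induction s with
  | zero => simp [hypBall]
  | succ s ih => simp [hypBall, ih]

lemma hypBall_mono {V : Type} (E : Finset (Finset V)) (v : V) :
    Monotone (fun s => hypBall E s v) :=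
  monotone_nat_of_le_succ (fun s u hu => by simp [hypBall, hu])

lemma mem_hypBall_succ {V : Type} {E : Finset (Finset V)} {s : ℕ} {v w u : V} {e : Finset V}
    (hw : w ∈ hypBall E s v) (he : e ∈ E) (hwe : w ∈ e) (hue : u ∈ e) :
    u ∈ hypBall E (s + 1) v := by
  classical
  simp only [hypBall, Finset.mem_union, Finset.mem_biUnion, Finset.mem_filter, id]
  exact Or.inr ⟨w, hw, e, ⟨he, hwe⟩, hue⟩

lemma card_hypBall_le {V : Type} {E : Finset (Finset V)} {k D : ℕ} (hE : ∀ e ∈ E, e.card = k)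
    (hD : ∀ v, hypDeg E v ≤ D) (s : ℕ) (v : V) : (hypBall E s v).card ≤ (1 + D * k) ^ s := by
  classical
  induction s with
  | zero => simp [hypBall]
  | succ s ih =>
    have h1 : (hypBall E (s + 1) v).card ≤ (hypBall E s v).card + (hypBall E s v).card * (D * k) := by
      rw [hypBall]
      refine (Finset.card_union_le _ _).trans (Nat.add_le_add_left ?_ _)
      refine Finset.card_biUnion_le_card_mul _ _ _ (fun w _ => ?_)
      refine (Finset.card_biUnion_le_card_mul _ _ k (fun e he => ?_)).trans ?_
      · exact (hE e (Finset.mem_filter.1 he).1).le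
      · exact Nat.mul_le_mul_right _ (hD w)
    calc _ ≤ _ := h1
      _ = (hypBall E s v).card * (1 + D * k) := by ring
      _ ≤ _ := by rw [pow_succ]; exact Nat.mul_le_mul_right _ ih

/-- A short cycle through the new edge `e₀` would give a path, avoiding `e₀`, between two of its
vertices. -/
lemma no_cycle_insert {V : Type} [DecidableEq V] {E : Finset (Finset V)} {e₀ : Finset V} {g : ℕ}
    (hE : ∀ m, 2 ≤ m → m ≤ g → ¬ HypergraphCycle E m)
    (h₀ : ∀ u ∈ e₀, ∀ w ∈ e₀, u ≠ w → w ∉ hypBall E g u) :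
    ∀ m, 2 ≤ m → m ≤ g → ¬ HypergraphCycle (insert e₀ E) m := by
  rintro m hm hmg ⟨e, v, he, hv, h⟩
  by_cases hex : ∃ i, e i = e₀
  · obtain ⟨i, hi⟩ := hex
    have key : ∀ j : ℕ, j + 1 ≤ m → v (i + j) ∈ hypBall E j (v i) := by
      intro j
      induction j with
      | zero => intro _; simp [hypBall]
      | succ j ih =>
        intro hj
        have hne : e (i + (j : ZMod m) + 1) ≠ e₀ := by
          rw [← hi]
          intro hc
          have h1 : ((j + 1 : ℕ) : ZMod m) = 0 := by
            have := he hc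
            push_cast
            simpa [add_assoc] using this
          rw [ZMod.natCast_eq_zero_iff] at h1
          have := Nat.le_of_dvd (by omega) h1
          omega
        have hmem : e (i + (j : ZMod m) + 1) ∈ E :=
          (Finset.mem_insert.1 (h _).1).resolve_left hne
        have h2 := (h (i + (j : ZMod m) + 1)).2.1
        have h3 := mem_hypBall_succ (ih (by omega)) hmem (h (i + (j : ZMod m))).2.2 h2
        simpa [add_assoc] using h3
    have hlast : i + ((m - 1 : ℕ) : ZMod m) = i - 1 := by
      rw [Nat.cast_sub (by omega)]; simp [sub_eq_add_neg]
    have h1 := hypBall_mono E (v i) (show m - 1 ≤ g by omega) (key (m - 1) (by omega))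
    rw [hlast] at h1
    refine h₀ (v i) (hi ▸ (h i).2.1) (v (i - 1)) ?_ ?_ h1
    · have := (h (i - 1)).2.2
      rwa [sub_add_cancel, hi] at this
    · intro hc
      have h2 := hv hc
      have h3 : ((1 : ℕ) : ZMod m) = 0 := by
        have : i - i = i - (i - 1) := by rw [← h2]
        simpa using this.symm
      rw [ZMod.natCast_eq_zero_iff] at h3
      have := Nat.le_of_dvd (by omega) h3
      omega
  · push Not at hex
    exact hE m hm hmg ⟨e, v, he, hv, fun i =>
      ⟨(Finset.mem_insert.1 (h i).1).resolve_left (hex i), (h i).2⟩⟩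

open Classical in
/-- If the `j`-th entry of a tuple is restricted to a set of size at most `B` depending only on
the other entries, then at most `B * n ^ (k - 1)` tuples are possible. -/
lemma card_coord_le {V : Type} [Fintype V] {k B : ℕ} (j : Fin k) (S : (Fin k → V) → Finset V)
    (hS : ∀ x, (S x).card ≤ B) (hdep : ∀ x y, (∀ l, l ≠ j → x l = y l) → S x = S y) :
    (Finset.univ.filter (fun x : Fin k → V => x j ∈ S x)).card ≤ B * Fintype.card V ^ (k - 1) := by
  let φ : (Fin k → V) → ({l : Fin k // l ≠ j} → V) := fun x l => x l
  refine (Finset.card_le_mul_card_image (f := φ) _ B ?_).trans (Nat.mul_le_mul_left _ ?_)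
  · intro a ha
    obtain ⟨y, -, rfl⟩ := Finset.mem_image.1 ha
    refine le_trans ?_ (hS y)
    have agree : ∀ x, φ x = φ y → ∀ l, l ≠ j → x l = y l := fun x hx l hl => congrFun hx ⟨l, hl⟩
    refine Finset.card_le_card_of_injOn (fun x => x j) ?_ ?_
    · intro x hx
      simp only [Finset.coe_filter, Finset.mem_filter, Finset.mem_univ, true_and,
        Set.mem_ofPred_eq] at hx
      rw [← hdep x y (agree x hx.2)]
      exact hx.1
    · intro x hx z hz hxz
      simp only [Finset.coe_filter, Finset.mem_filter, Finset.mem_univ, true_and,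
        Set.mem_ofPred_eq] at hx hz
      funext l
      by_cases hl : l = j
      · subst hl; exact hxz
      · rw [agree x hx.2 l hl, agree z hz.2 l hl]
  · refine (Finset.card_le_univ _).trans ?_
    simp [Fintype.card_subtype_compl]

open Classical in
/-- Double counting of incidences bounds the number of vertices of degree at least `D`. -/
lemma card_saturated_mul_le {V : Type} [Fintype V] {E : Finset (Finset V)} {k : ℕ}
    (hE : ∀ e ∈ E, e.card = k) (D : ℕ) :
    (Finset.univ.filter (fun v => D ≤ hypDeg E v)).card * D ≤ E.card * k := by
  have h1 : ∑ v : V, hypDeg E v = E.card * k := by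
    have h := Finset.sum_card_bipartiteAbove_eq_sum_card_bipartiteBelow
      (s := (Finset.univ : Finset V)) (t := E) (fun v e => v ∈ e)
    simp only [Finset.bipartiteAbove, Finset.bipartiteBelow] at h
    unfold hypDeg
    rw [h, Finset.sum_congr rfl (g := fun _ => k)]
    · simp
    · intro e he; simpa using hE e he
  rw [← h1, ← smul_eq_mul]
  refine (Finset.card_nsmul_le_sum _ (hypDeg E) D (fun v hv => (Finset.mem_filter.1 hv).2)).trans ?_
  exact Finset.sum_le_sum_of_subset (Finset.subset_univ _)

open Classical in
lemma card_bad_le {V : Type} [Fintype V] {E : Finset (Finset V)} {g D k B A : ℕ}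
    (hB : ∀ v, (hypBall E g v).card ≤ B)
    (hA : (Finset.univ.filter (fun v => D ≤ hypDeg E v)).card ≤ A) :
    (Finset.univ.filter (fun x : Fin k → V => ¬ GoodTuple E g D k x)).card ≤
      (k ^ 2 * B + k * A) * Fintype.card V ^ (k - 1) := by
  set n := Fintype.card V
  let P : Fin k × Fin k → Finset (Fin k → V) := fun p =>
    if p.1 = p.2 then ∅ else Finset.univ.filter (fun x => x p.2 ∈ hypBall E g (x p.1))
  let T : Fin k → Finset (Fin k → V) := fun i =>
    Finset.univ.filter (fun x => x i ∈ Finset.univ.filter (fun v => D ≤ hypDeg E v))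
  have hsub : Finset.univ.filter (fun x : Fin k → V => ¬ GoodTuple E g D k x) ⊆
      Finset.univ.biUnion P ∪ Finset.univ.biUnion T := by
    intro x hx
    have hx := (Finset.mem_filter.1 hx).2
    rw [Finset.mem_union]
    by_contra hc
    push Not at hc
    refine hx ⟨fun i j hij hmem => hc.1 ?_, fun i => ?_⟩
    · exact Finset.mem_biUnion.2 ⟨(i, j), Finset.mem_univ _, by simp [P, hij, hmem]⟩
    · by_contra hd
      exact hc.2 (Finset.mem_biUnion.2 ⟨i, Finset.mem_univ _, by simpa [T] using hd⟩)
  have hP : (Finset.univ.biUnion P).card ≤ k ^ 2 * (B * n ^ (k - 1)) := by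
    refine (Finset.card_biUnion_le_card_mul _ _ (B * n ^ (k - 1)) ?_).trans ?_
    · rintro ⟨i, j⟩ -
      by_cases hij : i = j
      · simp [P, hij]
      · simp only [P, hij, if_false]
        exact card_coord_le j (fun x => hypBall E g (x i)) (fun x => hB _)
          (fun x y hxy => by simp only [hxy i hij])
    · simp [sq]
  have hT : (Finset.univ.biUnion T).card ≤ k * (A * n ^ (k - 1)) := by
    refine (Finset.card_biUnion_le_card_mul _ _ (A * n ^ (k - 1)) ?_).trans ?_
    · intro i _
      exact card_coord_le i (fun _ => _) (fun _ => hA) (fun _ _ _ => rfl)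
    · simp
  calc _ ≤ _ := Finset.card_le_card hsub
    _ ≤ _ := Finset.card_union_le _ _
    _ ≤ _ := Nat.add_le_add hP hT
    _ = _ := by ring

open Classical in
/-- By pigeonhole some colour class has at least `n / r` elements. -/
lemma card_mono_ge {V : Type} [Fintype V] {r k : ℕ} (hr : 0 < r) (f : V → Fin r) :
    Fintype.card V ^ k ≤
      r ^ k * (Finset.univ.filter (fun x : Fin k → V => ∀ i j, f (x i) = f (x j))).card := by
  have : Nonempty (Fin r) := ⟨⟨0, hr⟩⟩
  obtain ⟨c, hc⟩ : ∃ c : Fin r, Fintype.card V ≤ r * (Finset.univ.filter (fun v => f v = c)).card := by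
    by_contra! hcon
    have h1 := Finset.card_eq_sum_card_fiberwise (s := (Finset.univ : Finset V))
      (t := (Finset.univ : Finset (Fin r))) (f := f) (by simp)
    have h2 : ∑ c : Fin r, r * (Finset.univ.filter (fun v => f v = c)).card <
        ∑ _c : Fin r, Fintype.card V :=
      Finset.sum_lt_sum_of_nonempty Finset.univ_nonempty (fun c _ => hcon c)
    rw [← Finset.mul_sum, ← h1] at h2
    simp at h2
  have h3 : (Finset.univ.filter (fun v => f v = c)).card ^ k ≤
      (Finset.univ.filter (fun x : Fin k → V => ∀ i j, f (x i) = f (x j))).card := by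
    have : (Fintype.piFinset (fun _ : Fin k => Finset.univ.filter (fun v => f v = c))).card =
      (Finset.univ.filter (fun v => f v = c)).card ^ k := by simp
    rw [← this]
    refine Finset.card_le_card (fun x hx => ?_)
    simp only [Fintype.mem_piFinset, Finset.mem_filter, Finset.mem_univ, true_and] at hx ⊢
    intro i j
    rw [hx i, hx j]
  calc _ ≤ _ := Nat.pow_le_pow_left hc k
    _ = _ := mul_pow _ _ _
    _ ≤ _ := Nat.mul_le_mul_left _ h3

open Classical in
/-- If non-good tuples are few, some good tuple is monochromatic for at least a `1 / (2 r ^ k)`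
fraction of any nonempty family of colourings. -/
lemma exists_good_tuple {V : Type} [Fintype V] {r k : ℕ} (hr : 0 < r) (G : (Fin k → V) → Prop)
    (hV : 0 < Fintype.card V)
    (hbad : 2 * r ^ k * (Finset.univ.filter (fun x => ¬ G x)).card ≤ Fintype.card V ^ k)
    (F : Finset (V → Fin r)) (hF : F.Nonempty) :
    ∃ x, G x ∧ F.card ≤ 2 * r ^ k * (F.filter (fun f => ∀ i j, f (x i) = f (x j))).card := by
  set n := Fintype.card V
  have h1 : ∀ f : V → Fin r, n ^ k ≤ 2 * r ^ k *
      ((Finset.univ.filter G).filter (fun x => ∀ i j, f (x i) = f (x j))).card := by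
    intro f
    have h2 := card_mono_ge (k := k) hr f
    have h3 : (Finset.univ.filter (fun x : Fin k → V => ∀ i j, f (x i) = f (x j))).card ≤
        ((Finset.univ.filter G).filter (fun x => ∀ i j, f (x i) = f (x j))).card +
        (Finset.univ.filter (fun x => ¬ G x)).card := by
      refine (Finset.card_le_card (fun x hx => ?_)).trans (Finset.card_union_le _ _)
      have := (Finset.mem_filter.1 hx).2
      by_cases hG : G x <;> simp [hG]
      simpa using this
    have h4 := Nat.mul_le_mul_left (2 * r ^ k) h3
    rw [mul_add] at h4
    have h5 : 2 * n ^ k ≤ 2 * r ^ k *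
        (Finset.univ.filter (fun x : Fin k → V => ∀ i j, f (x i) = f (x j))).card := by
      rw [mul_assoc]; exact Nat.mul_le_mul_left 2 h2
    omega
  by_contra! hcon
  have hdc := Finset.sum_card_bipartiteAbove_eq_sum_card_bipartiteBelow
    (s := F) (t := Finset.univ.filter G) (fun f x => ∀ i j, f (x i) = f (x j))
  simp only [Finset.bipartiteAbove, Finset.bipartiteBelow] at hdc
  have hlow : F.card * n ^ k ≤ 2 * r ^ k * ∑ f ∈ F,
      ((Finset.univ.filter G).filter (fun x => ∀ i j, f (x i) = f (x j))).card := by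
    rw [Finset.mul_sum, ← smul_eq_mul]
    exact Finset.card_nsmul_le_sum _ _ _ (fun f _ => h1 f)
  rw [hdc, Finset.mul_sum] at hlow
  have hne : (Finset.univ.filter G).Nonempty := by
    by_contra hemp
    rw [Finset.not_nonempty_iff_eq_empty] at hemp
    rw [hemp] at hlow
    have : 0 < F.card * n ^ k := Nat.mul_pos hF.card_pos (pow_pos hV k)
    simp at hlow
    rcases hlow with h | h
    · simp [h] at hF
    · omega
  have hup := Finset.sum_lt_sum_of_nonempty hne
    (fun x hx => hcon x (Finset.mem_filter.1 hx).2)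
  rw [Finset.sum_const, smul_eq_mul] at hup
  have hG : (Finset.univ.filter G).card ≤ n ^ k := by
    refine (Finset.card_le_univ _).trans ?_
    simp [n]
  have := Nat.mul_le_mul_right F.card hG
  rw [mul_comm F.card] at hlow
  omega

/-- One greedy step: an edge can be added which kills at least a `1 / (2 r ^ k)` fraction of the
remaining proper colourings and preserves uniformity, girth and the degree bound. -/
lemma greedy_step {V : Type} [Fintype V] {E : Finset (Finset V)} {g k r D A : ℕ} (hr : 0 < r)
    (hk : 0 < k) (hV : 0 < Fintype.card V)
    (hn : 2 * r ^ k * (k ^ 2 * (1 + D * k) ^ g + k * A) ≤ Fintype.card V)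
    (hA : ∀ a, a * D ≤ E.card * k → a ≤ A)
    (hE : ∀ e ∈ E, e.card = k) (hcyc : ∀ m, 2 ≤ m → m ≤ g → ¬ HypergraphCycle E m)
    (hD : ∀ v, hypDeg E v ≤ D) :
    ∃ E' : Finset (Finset V), (∀ e ∈ E', e.card = k) ∧
      (∀ m, 2 ≤ m → m ≤ g → ¬ HypergraphCycle E' m) ∧ (∀ v, hypDeg E' v ≤ D) ∧
      E'.card ≤ E.card + 1 ∧
      2 * r ^ k * (properCols E' r).card ≤ (2 * r ^ k - 1) * (properCols E r).card := by
  classical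
  rcases (properCols E r).eq_empty_or_nonempty with hF | hF
  · exact ⟨E, hE, hcyc, hD, Nat.le_succ _, by simp [hF]⟩
  have hbad : 2 * r ^ k * (Finset.univ.filter
      (fun x : Fin k → V => ¬ GoodTuple E g D k x)).card ≤ Fintype.card V ^ k := by
    have h1 := card_bad_le (k := k) (fun v => card_hypBall_le hE hD g v)
      (hA _ (card_saturated_mul_le hE D))
    calc _ ≤ 2 * r ^ k * ((k ^ 2 * (1 + D * k) ^ g + k * A) * Fintype.card V ^ (k - 1)) :=
          Nat.mul_le_mul_left _ h1
      _ = (2 * r ^ k * (k ^ 2 * (1 + D * k) ^ g + k * A)) * Fintype.card V ^ (k - 1) := by ring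
      _ ≤ Fintype.card V * Fintype.card V ^ (k - 1) := Nat.mul_le_mul_right _ hn
      _ = _ := by rw [← pow_succ']; congr 1; omega
  obtain ⟨x, ⟨hx1, hx2⟩, hx⟩ := exists_good_tuple hr (GoodTuple E g D k) hV hbad _ hF
  have hinj : Function.Injective x := by
    intro i j hij
    by_contra hne
    exact hx1 i j hne (hij ▸ self_mem_hypBall E g (x i))
  refine ⟨insert (Finset.univ.image x) E, ?_, ?_, ?_, Finset.card_insert_le _ _, ?_⟩
  · intro e he
    rcases Finset.mem_insert.1 he with rfl | he
    · simp [Finset.card_image_of_injective _ hinj]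
    · exact hE e he
  · refine no_cycle_insert hcyc ?_
    intro u hu w hw huw
    obtain ⟨i, -, rfl⟩ := Finset.mem_image.1 hu
    obtain ⟨j, -, rfl⟩ := Finset.mem_image.1 hw
    exact hx1 i j (fun h => huw (by rw [h]))
  · intro v
    unfold hypDeg
    rw [Finset.filter_insert]
    split_ifs with hv
    · obtain ⟨i, -, rfl⟩ := Finset.mem_image.1 hv
      exact (Finset.card_insert_le _ _).trans (by have := hx2 i; unfold hypDeg at this; omega)
    · exact hD v
  · set F := properCols E r
    have hsub : properCols (insert (Finset.univ.image x) E) r ⊆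
        F.filter (fun f => ¬ ∀ i j, f (x i) = f (x j)) := by
      intro f hf
      simp only [properCols, F, Finset.mem_filter, Finset.mem_univ, true_and,
        Finset.forall_mem_insert, Finset.forall_mem_image, forall_const] at hf ⊢
      exact ⟨hf.2, fun h => hf.1 (fun i j => h i j)⟩
    have hle := Finset.card_le_card hsub
    have hsplit := Finset.card_filter_add_card_filter_not (s := F)
      (fun f => ∀ i j, f (x i) = f (x j))
    rw [Nat.sub_mul, one_mul]
    have h1 := Nat.mul_le_mul_left (2 * r ^ k) hle
    have h2 := congrArg (fun t => 2 * r ^ k * t) hsplit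
    simp only [mul_add] at h2
    omega

/-- **Erdős–Hajnal.** For all `g, k, r ≥ 2` there is a finite `k`-uniform hypergraph with no
cycle of length at most `g` and no proper colouring with `r` colours. -/
theorem erdos_hajnal_hypergraph_girth (g k r : ℕ) (hg : 2 ≤ g) (hk : 2 ≤ k) (hr : 2 ≤ r) :
    ∃ (V : Type) (_ : Fintype V) (E : Finset (Finset V)),
      (∀ e ∈ E, e.card = k) ∧
      (∀ m, 2 ≤ m → m ≤ g → ¬ HypergraphCycle E m) ∧
      (∀ f : V → Fin r, ∃ e ∈ E, ∀ x ∈ e, ∀ y ∈ e, f x = f y) := by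
  classical
  set Q := 2 * r ^ k with hQ
  have hQpos : 0 < Q := by positivity
  obtain ⟨L, hL⟩ : ∃ L : ℕ, r * (Q - 1) ^ L < Q ^ L := by
    have hQ' : (0 : ℝ) < Q := by exact_mod_cast hQpos
    have hr' : (0 : ℝ) < r := by positivity
    obtain ⟨L, hL⟩ := exists_pow_lt_of_lt_one (x := (1 / r : ℝ)) (y := ((Q : ℝ) - 1) / Q)
      (by positivity) (by rw [div_lt_one hQ']; linarith)
    refine ⟨L, ?_⟩
    rw [div_pow, div_lt_div_iff₀ (by positivity) hr', one_mul] at hL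
    have : ((r * (Q - 1) ^ L : ℕ) : ℝ) < ((Q ^ L : ℕ) : ℝ) := by
      push_cast [Nat.cast_sub (show 1 ≤ Q from hQpos)]
      linarith
    exact_mod_cast this
  have hLpos : 0 < L := by
    rcases Nat.eq_zero_or_pos L with rfl | h
    · simp at hL; omega
    · exact h
  -- `D` makes the vertices of degree `D` rare among `n L` edges; `n` then beats the ball size.
  set D := 2 * Q * k ^ 2 * L with hD
  set n := 2 * Q * k ^ 2 * (1 + D * k) ^ g with hn
  have hnpos : 0 < n := by positivity
  have main : ∀ s, s ≤ n * L → ∃ E : Finset (Finset (Fin n)), (∀ e ∈ E, e.card = k) ∧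
      (∀ m, 2 ≤ m → m ≤ g → ¬ HypergraphCycle E m) ∧ (∀ v, hypDeg E v ≤ D) ∧
      E.card ≤ s ∧ Q ^ s * (properCols E r).card ≤ (Q - 1) ^ s * r ^ n := by
    intro s
    induction s with
    | zero =>
      intro _
      refine ⟨∅, by simp, ?_, by simp [hypDeg], by simp, by simp [properCols]⟩
      rintro m - - ⟨e, v, -, -, h⟩
      simpa using (h 0).1
    | succ s ih =>
      intro hs
      obtain ⟨E, h1, h2, h3, h4, h5⟩ := ih (by omega)
      obtain ⟨E', h1', h2', h3', h4', h5'⟩ := greedy_step (E := E) (r := r)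
        (A := k * (1 + D * k) ^ g)
        (by omega) (by omega) (by simpa using hnpos)
        (by
          rw [Fintype.card_fin, hn, ← hQ]
          apply le_of_eq
          ring)
        (by
          intro a ha
          have h6 : a * D ≤ n * L * k := ha.trans (Nat.mul_le_mul_right _ (by omega))
          have hc : 0 < 2 * Q * k ^ 2 * L := by positivity
          refine Nat.le_of_mul_le_mul_right (c := 2 * Q * k ^ 2 * L) ?_ hc
          refine h6.trans (le_of_eq ?_)
          rw [hn]; ring) h1 h2 h3
      refine ⟨E', h1', h2', h3', by omega, ?_⟩
      calc Q ^ (s + 1) * (properCols E' r).card = Q ^ s * (Q * (properCols E' r).card) := by ring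
        _ ≤ Q ^ s * ((Q - 1) * (properCols E r).card) := Nat.mul_le_mul_left _ h5'
        _ = (Q - 1) * (Q ^ s * (properCols E r).card) := by ring
        _ ≤ (Q - 1) * ((Q - 1) ^ s * r ^ n) := Nat.mul_le_mul_left _ h5
        _ = _ := by ring
  obtain ⟨E, h1, h2, -, -, h5⟩ := main (n * L) le_rfl
  refine ⟨Fin n, inferInstance, E, h1, h2, ?_⟩
  have hlt : (Q - 1) ^ (n * L) * r ^ n < Q ^ (n * L) := by
    have := Nat.pow_lt_pow_left hL hnpos.ne'
    calc _ = (r * (Q - 1) ^ L) ^ n := by rw [mul_pow, ← pow_mul, mul_comm L n]; ring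
      _ < _ := this
      _ = _ := by rw [← pow_mul, mul_comm L n]
  have hzero : (properCols E r).card = 0 := by
    by_contra hne
    have := Nat.le_mul_of_pos_right (Q ^ (n * L)) (Nat.pos_of_ne_zero hne)
    omega
  intro f
  by_contra! hcon
  have hf : f ∈ properCols E r := by
    simp only [properCols, Finset.mem_filter, Finset.mem_univ, true_and]
    intro e he hmono
    obtain ⟨x, hx, y, hy, hxy⟩ := hcon e he
    exact hxy (hmono x hx y hy)
  rw [Finset.card_eq_zero] at hzero
  simp [hzero] at hf
end

section
/- For every integer r ≥ 2 there exists a natural number k such that every finite simple graph G with chromatic number greater than k contains a triangle-free subgraph with chromatic number greater than r; that is, there is a subset E' of the edges of G such that the graph (V(G), E') contains no triangle and has chromatic number greater than r. -/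
/-!
The proof splits according to whether `G` contains a large clique.

* A clique on `(2 ^ r + 1) ^ 2` vertices contains every graph on the ordered pairs from a
  set of `2 ^ r + 1` elements, in particular the shift graph (`shiftGraph`), which is triangle-free
  and not `r`-colourable.
* For graphs without a clique of size `m`, induct on `m` (`exists_bound_of_cliqueFree`). If some
  neighbourhood has large chromatic number, the induction hypothesis applies inside it. Otherwise
  all neighbourhoods are properly `c`-colourable for a fixed `c`. Order the vertices linearly and
  give each edge `u < v` the colour of `u` in the colouring of the neighbourhood of `v`. Each of
  the `c` colour classes is triangle-free: the two lower vertices of a triangle are adjacent in `G`,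
  so its two edges at the top vertex have different colours. If every class were `r`-colourable,
  the product colouring would colour `G` with `r ^ c` colours.
-/

namespace Rodl

/-- `G` has a triangle-free spanning subgraph that is not `r`-colourable. -/
def HasTriangleFree (r : ℕ) {V : Type} (G : SimpleGraph V) : Prop :=
  ∃ G' : SimpleGraph V, G' ≤ G ∧ G'.CliqueFree 3 ∧ ¬ G'.Colorable r

theorem hasTriangleFree_of_map_le {r : ℕ} {V W : Type} {G : SimpleGraph V} (f : W ↪ V)
    (H : SimpleGraph W) (hle : H.map f ≤ G) (h3 : H.CliqueFree 3) (hc : ¬ H.Colorable r) :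
    HasTriangleFree r G := by
  have : Nonempty W := by
    by_contra h
    rw [not_nonempty_iff] at h
    exact hc (.of_isEmpty r)
  exact ⟨H.map f, hle, SimpleGraph.cliqueFree_map_iff.2 h3,
    fun h => hc (h.of_hom (SimpleGraph.Embedding.map f H).toHom)⟩

/-- The shift graph on ordered pairs from `Fin N`: `(i, j)` with `i < j` is joined to `(j, k)`
with `j < k`. Pairs that are not increasing are kept as isolated vertices. -/
def shiftGraph (N : ℕ) : SimpleGraph (Fin N × Fin N) where
  Adj p q := p.1 < p.2 ∧ q.1 < q.2 ∧ (p.2 = q.1 ∨ q.2 = p.1)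
  symm := ⟨fun _ _ h => ⟨h.2.1, h.1, h.2.2.symm⟩⟩
  loopless := ⟨fun p h => by
    rcases h with ⟨h1, -, h | h⟩
    · exact h1.ne' h
    · exact h1.ne' h⟩

theorem shiftGraph_cliqueFree (N : ℕ) : (shiftGraph N).CliqueFree 3 := by
  intro s hs
  obtain ⟨a, b, c, hab, hac, hbc, -⟩ := SimpleGraph.is3Clique_iff.1 hs
  simp only [shiftGraph] at hab hac hbc
  omega

/-- In a colouring of the shift graph, the sets of colours used on the pairs `(i, ·)` are pairwise
distinct: for `i < j` the colour of `(i, j)` cannot occur on any pair `(j, k)`. -/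
theorem shiftGraph_not_colorable (r : ℕ) : ¬ (shiftGraph (2 ^ r + 1)).Colorable r := by
  rintro ⟨C⟩
  let S : Fin (2 ^ r + 1) → Set (Fin r) := fun i => {x | ∃ j, i < j ∧ C (i, j) = x}
  have key : ∀ i j, i < j → S i ≠ S j := by
    intro i j hij h
    have h1 : C (i, j) ∈ S i := ⟨j, hij, rfl⟩
    rw [h] at h1
    obtain ⟨k, hjk, hk⟩ := h1
    exact C.valid (show (shiftGraph _).Adj (i, j) (j, k) from ⟨hij, hjk, .inl rfl⟩) hk.symm
  have inj : Function.Injective S := by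
    intro i j h
    rcases lt_trichotomy i j with hij | hij | hij
    · exact (key i j hij h).elim
    · exact hij
    · exact (key j i hij h.symm).elim
  have := Fintype.card_le_of_injective S inj
  simp at this

theorem hasTriangleFree_of_not_cliqueFree {r : ℕ} {V : Type} {G : SimpleGraph V}
    (h : ¬ G.CliqueFree ((2 ^ r + 1) * (2 ^ r + 1))) : HasTriangleFree r G := by
  have f := SimpleGraph.topEmbeddingOfNotCliqueFree h
  refine hasTriangleFree_of_map_le (finProdFinEquiv.toEmbedding.trans f.toEmbedding)
    (shiftGraph (2 ^ r + 1)) ?_ (shiftGraph_cliqueFree _) (shiftGraph_not_colorable r)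
  rw [SimpleGraph.map_le_iff_le_comap]
  intro p q hpq
  have hne : p ≠ q := hpq.ne
  simpa using hne

/-- Colour class `i` of the edge colouring that gives an edge `u < v` of `G` the colour of `u` in
the chosen colouring of the neighbourhood of `v`. -/
def colourClass {V : Type} [LinearOrder V] (G : SimpleGraph V) {c : ℕ}
    (C : ∀ v, (G.induce (G.neighborSet v)).Coloring (Fin c)) (i : Fin c) : SimpleGraph V where
  Adj u v := (u < v ∧ ∃ h : G.Adj v u, C v ⟨u, h⟩ = i) ∨ (v < u ∧ ∃ h : G.Adj u v, C u ⟨v, h⟩ = i)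
  symm := ⟨fun _ _ h => h.symm⟩
  loopless := ⟨fun v h => by simp at h⟩

section

variable {V : Type} [LinearOrder V] (G : SimpleGraph V) {c : ℕ}
  (C : ∀ v, (G.induce (G.neighborSet v)).Coloring (Fin c))

theorem colourClass_le (i : Fin c) : colourClass G C i ≤ G := by
  rintro u v (⟨-, h, -⟩ | ⟨-, h, -⟩)
  · exact h.symm
  · exact h

/-- The two lower vertices of a triangle would be adjacent vertices of equal colour in the
neighbourhood of the top one. -/
theorem colourClass_cliqueFree (i : Fin c) : (colourClass G C i).CliqueFree 3 := by
  have key : ∀ u w v, u < v → w < v → (colourClass G C i).Adj u v → (colourClass G C i).Adj w v →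
      ¬ (colourClass G C i).Adj u w := by
    rintro u w v huv hwv (⟨-, hu, eu⟩ | ⟨h, -⟩) (⟨-, hw, ew⟩ | ⟨h', -⟩) huw
    · have hadj : (G.induce (G.neighborSet v)).Adj ⟨u, hu⟩ ⟨w, hw⟩ := colourClass_le G C i huw
      exact (C v).valid hadj (eu.trans ew.symm)
    · exact lt_asymm h' hwv
    · exact lt_asymm h huv
    · exact lt_asymm h huv
  intro s hs
  obtain ⟨x, y, z, hxy, hxz, hyz, -⟩ := SimpleGraph.is3Clique_iff.1 hs
  rcases lt_or_gt_of_ne hxy.ne with h1 | h1 <;> rcases lt_or_gt_of_ne hyz.ne with h2 | h2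
  · exact key x y z (h1.trans h2) h2 hxz hyz hxy
  · exact key x z y h1 h2 hxy hyz.symm hxz
  · rcases lt_or_gt_of_ne hxz.ne with h3 | h3
    · exact key x y z h3 h2 hxz hyz hxy
    · exact key y z x h1 h3 hxy.symm hxz.symm hyz
  · exact key y z x h1 (h2.trans h1) hxy.symm hxz.symm hyz

theorem hasTriangleFree_of_neighborSet_coloring {r : ℕ}
    (C : ∀ v, (G.induce (G.neighborSet v)).Coloring (Fin c)) (hG : ¬ G.Colorable (r ^ c)) :
    HasTriangleFree r G := by
  by_contra hno
  have hcol : ∀ i, (colourClass G C i).Colorable r := fun i => by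
    by_contra h
    exact hno ⟨_, colourClass_le G C i, colourClass_cliqueFree G C i, h⟩
  have D : ∀ i, (colourClass G C i).Coloring (Fin r) := fun i => (hcol i).some
  -- The product of the colourings of the classes is a proper colouring of `G`.
  let P : G.Coloring (Fin c → Fin r) := SimpleGraph.Coloring.mk (fun v i => D i v) (by
    intro u v huv heq
    rcases lt_or_gt_of_ne huv.ne with h | h
    · exact (D (C v ⟨u, huv.symm⟩)).valid (.inl ⟨h, huv.symm, rfl⟩) (congrFun heq _)
    · exact (D (C u ⟨v, huv⟩)).valid (.inr ⟨h, huv, rfl⟩) (congrFun heq _))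
  have := P.colorable
  simp only [Fintype.card_fun, Fintype.card_fin] at this
  exact hG this

end

theorem cliqueFree_induce_neighborSet {V : Type} {G : SimpleGraph V} {m : ℕ}
    (h : G.CliqueFree (m + 1)) (v : V) : (G.induce (G.neighborSet v)).CliqueFree m := by
  rw [SimpleGraph.cliqueFree_induce_iff]
  simpa using SimpleGraph.CliqueFreeOn.of_succ G (G.cliqueFreeOn_univ.2 h) (Set.mem_univ v)

theorem exists_bound_of_cliqueFree (r m : ℕ) :
    ∃ k : ℕ, ∀ (V : Type) [Finite V] (G : SimpleGraph V),
      G.CliqueFree m → ¬ G.Colorable k → HasTriangleFree r G := by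
  induction m with
  | zero => exact ⟨0, fun V _ G h => (SimpleGraph.not_cliqueFree_zero h).elim⟩
  | succ m ih =>
    obtain ⟨c, hc⟩ := ih
    refine ⟨r ^ c, fun V _ G hfree hcol => ?_⟩
    by_cases hN : ∀ v, (G.induce (G.neighborSet v)).Colorable c
    · obtain ⟨n, ⟨e⟩⟩ := Finite.exists_equiv_fin V
      let _ : LinearOrder V := LinearOrder.lift' e e.injective
      exact hasTriangleFree_of_neighborSet_coloring G (fun v => (hN v).some) hcol
    · push Not at hN
      obtain ⟨v, hv⟩ := hN
      obtain ⟨H, hle, h3, hH⟩ := hc _ _ (cliqueFree_induce_neighborSet hfree v) hv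
      refine hasTriangleFree_of_map_le (Function.Embedding.subtype _) H ?_ h3 hH
      rw [SimpleGraph.map_le_iff_le_comap]
      exact hle

end Rodl

/-- **Rödl's theorem.** For every `r ≥ 2` there is a `k` such that every finite graph with
chromatic number greater than `k` has a triangle-free (spanning) subgraph with chromatic
number greater than `r`. -/
theorem rodl_triangle_free_subgraph (r : ℕ) (hr : 2 ≤ r) :
    ∃ k : ℕ, ∀ (V : Type) [Fintype V] (G : SimpleGraph V),
      (k : ℕ∞) < G.chromaticNumber →
      ∃ G' : SimpleGraph V, G' ≤ G ∧ G'.CliqueFree 3 ∧ (r : ℕ∞) < G'.chromaticNumber := by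
  obtain ⟨k, hk⟩ := Rodl.exists_bound_of_cliqueFree r ((2 ^ r + 1) * (2 ^ r + 1))
  refine ⟨k, fun V _ G hG => ?_⟩
  rw [← not_le, SimpleGraph.chromaticNumber_le_iff_colorable] at hG
  have key : Rodl.HasTriangleFree r G := by
    by_cases hfree : G.CliqueFree ((2 ^ r + 1) * (2 ^ r + 1))
    · exact hk V G hfree hG
    · exact Rodl.hasTriangleFree_of_not_cliqueFree hfree
  obtain ⟨G', hle, h3, hc⟩ := key
  refine ⟨G', hle, h3, ?_⟩
  rwa [← not_le, SimpleGraph.chromaticNumber_le_iff_colorable]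
end

section
/- For every natural number r there exists a finite simple graph G such that: G contains no clique on 4 vertices, the chromatic number of G is greater than r, and every induced subgraph of G that is triangle-free has chromatic number at most 4. -/
/-!
The graph comes from a finite acyclic digraph `D` of large chromatic number in which all directed
paths between two given vertices have the same length. Join `u` and `v` in `G` when a path from
one to the other has length not divisible by `3`.

* `G` contains `D`, so its chromatic number is large.
* The vertices of a clique are pairwise comparable. Measuring path lengths modulo `3` from the
  smallest one is injective on the clique, so there are at most three vertices.
* In a triangle-free induced subgraph, the edges of residue `1` contain no directed path
  `u → v → w`: lengths add up, so `u` and `w` would be joined with residue `2`, a triangle.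
  The same holds for the edges of residue `2`. Hence each of the two classes is bipartite
  (a vertex either has an out-edge of the class or not), and the product colouring uses `4` colours.

The digraph `D` is built by Zykov's construction with all new edges leaving the new vertices: take
`n + 1` copies of the previous digraph and, for every choice of one vertex in each copy, a new
vertex with an arc to each chosen vertex. If the previous digraph is not `n`-colourable, an
`(n + 1)`-colouring uses colour `i` in copy `i`, for every `i`, and the new vertex
attached to such vertices cannot be coloured.
-/

/-- The path-length residues modulo `3` of an acyclic digraph on `V`, axiomatised:
`R u v a` stands for "there is a directed path of positive length from `u` to `v`, of length
congruent to `a` modulo `3`". The residue is determined by the endpoints. -/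
structure IsPathResidue {V : Type} (R : V → V → ZMod 3 → Prop) : Prop where
  /-- Lengths add under concatenation. -/
  trans : ∀ {u v w a b}, R u v a → R v w b → R u w (a + b)
  /-- The endpoints determine the residue. -/
  unique : ∀ {u v a b}, R u v a → R u v b → a = b
  /-- There are no directed cycles. -/
  irrefl : ∀ {u a}, ¬ R u u a

/-- One step of the oriented Zykov construction, at the level of path residues. The vertex
`inl (i, v)` is the vertex `v` of copy `i`, and `inr f` is the new vertex with an arc to the vertex
`f i` of copy `i` for each `i`. -/
def zykovStep {ι V : Type} (R : V → V → ZMod 3 → Prop) :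
    (ι × V) ⊕ (ι → V) → (ι × V) ⊕ (ι → V) → ZMod 3 → Prop
  | .inl p, .inl q, a => p.1 = q.1 ∧ R p.2 q.2 a
  | .inr f, .inl q, a => (f q.1 = q.2 ∧ a = 1) ∨ ∃ b, R (f q.1) q.2 b ∧ a = 1 + b
  | _, .inr _, _ => False

lemma IsPathResidue.zykovStep {ι V : Type} {R : V → V → ZMod 3 → Prop} (hR : IsPathResidue R) :
    IsPathResidue (zykovStep (ι := ι) R) where
  trans := by
    rintro (⟨i, u⟩ | f) (⟨j, v⟩ | g) (⟨k, w⟩ | h) a b h1 h2 <;>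
      simp only [_root_.zykovStep] at h1 h2 ⊢
    · exact ⟨h1.1.trans h2.1, hR.trans h1.2 h2.2⟩
    · obtain ⟨rfl, h2⟩ := h2
      rcases h1 with ⟨rfl, rfl⟩ | ⟨c, hc, rfl⟩
      · exact Or.inr ⟨b, h2, rfl⟩
      · exact Or.inr ⟨c + b, hR.trans hc h2, add_assoc _ _ _⟩
  unique := by
    rintro (⟨i, u⟩ | f) (⟨j, v⟩ | g) a b h1 h2 <;> simp only [_root_.zykovStep] at h1 h2
    · exact hR.unique h1.2 h2.2
    · rcases h1 with ⟨rfl, rfl⟩ | ⟨c, hc, rfl⟩ <;> rcases h2 with ⟨h2, rfl⟩ | ⟨d, hd, rfl⟩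
      · rfl
      · exact (hR.irrefl hd).elim
      · subst h2
        exact (hR.irrefl hc).elim
      · rw [hR.unique hc hd]
  irrefl := by
    rintro (⟨i, u⟩ | f) a h <;> simp only [_root_.zykovStep] at h
    exact hR.irrefl h.2

/-- Only pairs of residue `1` are used to obstruct colourings; these include all arcs. -/
lemma exists_isPathResidue (n : ℕ) :
    ∃ (V : Type) (_ : Fintype V) (R : V → V → ZMod 3 → Prop), IsPathResidue R ∧
      ∀ c : V → Fin n, ∃ u v, R u v 1 ∧ c u = c v := by
  classical
  induction n with
  | zero =>
    exact ⟨Unit, inferInstance, fun _ _ _ => False, ⟨by simp, by simp, by simp⟩,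
      fun c => (c ()).elim0⟩
  | succ n ih =>
    obtain ⟨V, _, R, hR, hcol⟩ := ih
    refine ⟨(Fin (n + 1) × V) ⊕ (Fin (n + 1) → V), inferInstance, zykovStep R,
      hR.zykovStep, fun c => ?_⟩
    by_contra! hc
    have key : ∀ i, ∃ v, c (.inl (i, v)) = i := by
      -- A copy avoiding the colour `i` would be coloured by `{j // j ≠ i}`, which has `n` elements.
      intro i
      by_contra! hi
      choose c' hc' using fun v => Fin.exists_succAbove_eq (hi v)
      obtain ⟨u, v, huv, he⟩ := hcol c'
      exact hc (.inl (i, u)) (.inl (i, v)) ⟨rfl, huv⟩ (by rw [← hc' u, ← hc' v, he])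
    choose f hf using key
    exact hc (.inr f) (.inl (c (.inr f), f (c (.inr f)))) (Or.inl ⟨rfl, rfl⟩) (hf _).symm

/-- Two vertices are adjacent when a directed path joins them, in one of the two directions,
whose length is not divisible by `3`. -/
def residueGraph {V : Type} {R : V → V → ZMod 3 → Prop} (hR : IsPathResidue R) :
    SimpleGraph V where
  Adj u v := ∃ a, a ≠ 0 ∧ (R u v a ∨ R v u a)
  symm := ⟨fun _ _ ⟨a, ha, h⟩ => ⟨a, ha, h.symm⟩⟩
  loopless := ⟨fun _ ⟨_, _, h⟩ => h.elim hR.irrefl hR.irrefl⟩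

lemma residueGraph_cliqueFree {V : Type} [Fintype V] {R : V → V → ZMod 3 → Prop}
    (hR : IsPathResidue R) : (residueGraph hR).CliqueFree 4 := by
  classical
  intro s hs
  have hcl := hs.isClique
  have hne : (s : Set V).Nonempty := by
    rw [Finset.coe_nonempty, ← Finset.card_pos, hs.card_eq]
    norm_num
  let lt : V → V → Prop := fun u v => ∃ a, R u v a
  have : IsTrans V lt := ⟨fun _ _ _ ⟨a, h⟩ ⟨b, h'⟩ => ⟨a + b, hR.trans h h'⟩⟩
  have : Std.Irrefl lt := ⟨fun _ ⟨_, h⟩ => hR.irrefl h⟩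
  obtain ⟨m, hm, hmin⟩ := (Finite.wellFounded_of_trans_of_irrefl lt).has_min (s : Set V) hne
  -- `g x` is the residue of the path from the minimal vertex `m` to `x`.
  have hg : ∀ x, ∃ a, x ∈ s → (x = m ∧ a = 0) ∨ R m x a := by
    intro x
    by_cases hx : x ∈ s
    · by_cases hxm : x = m
      · exact ⟨0, fun _ => Or.inl ⟨hxm, rfl⟩⟩
      · obtain ⟨a, -, h | h⟩ := hcl hm hx (Ne.symm hxm)
        · exact ⟨a, fun _ => Or.inr h⟩
        · exact (hmin x hx ⟨a, h⟩).elim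
    · exact ⟨0, fun h => (hx h).elim⟩
  choose g hg using hg
  have hstep : ∀ x ∈ s, ∀ y ∈ s, ∀ a, R x y a → g y = g x + a := by
    intro x hx y hy a h
    rcases hg y hy with ⟨rfl, -⟩ | h2
    · exact (hmin x hx ⟨a, h⟩).elim
    rcases hg x hx with ⟨rfl, h0⟩ | h1
    · rw [h0, zero_add]
      exact hR.unique h2 h
    · exact hR.unique h2 (hR.trans h1 h)
  have hinj : Set.InjOn g s := by
    intro x hx y hy hxy
    by_contra hne
    obtain ⟨a, ha, h | h⟩ := hcl hx hy hne
    · exact ha (by simpa [hxy] using hstep x hx y hy a h)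
    · exact ha (by simpa [hxy] using hstep y hy x hx a h)
  have := Finset.card_le_card_of_injOn (t := Finset.univ) g (fun _ _ => Finset.mem_univ _) hinj
  rw [hs.card_eq, Finset.card_univ, ZMod.card] at this
  omega

/-- Consecutive pairs of the same nonzero residue `a` span a triangle, because the residue
`a + a` of the composite is again nonzero. -/
lemma no_two_step {V : Type} {R : V → V → ZMod 3 → Prop} (hR : IsPathResidue R) {s : Set V}
    (hs : ((residueGraph hR).induce s).CliqueFree 3) {a : ZMod 3} (ha : a ≠ 0) {u v w : s}
    (h1 : R u v a) (h2 : R v w a) : False := by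
  classical
  have h0 : a + a ≠ 0 := by
    clear h1 h2
    revert a
    decide
  exact hs {u, v, w} (SimpleGraph.is3Clique_triple_iff.2
    ⟨⟨a, ha, Or.inl h1⟩, ⟨a + a, h0, Or.inl (hR.trans h1 h2)⟩, ⟨a, ha, Or.inl h2⟩⟩)

lemma residueGraph_induce_colorable {V : Type} {R : V → V → ZMod 3 → Prop}
    (hR : IsPathResidue R) (s : Set V) (hs : ((residueGraph hR).induce s).CliqueFree 3) :
    ((residueGraph hR).induce s).Colorable 4 := by
  classical
  -- Record for each of the residues `1` and `2` whether the vertex has an out-edge of that residue.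
  let c : s → Bool × Bool := fun u => (decide (∃ w : s, R u w 1), decide (∃ w : s, R u w 2))
  have main : ∀ (u v : s) (a : ZMod 3), a ≠ 0 → R u v a → c u ≠ c v := by
    intro u v a ha h heq
    have hout : ∃ w : s, R v w a := by
      have hcase : a = 1 ∨ a = 2 := by
        clear h
        revert a
        decide
      rcases hcase with rfl | rfl
      · exact (decide_eq_decide.1 (congrArg Prod.fst heq)).1 ⟨v, h⟩
      · exact (decide_eq_decide.1 (congrArg Prod.snd heq)).1 ⟨v, h⟩
    obtain ⟨w, hw⟩ := hout
    exact no_two_step hR hs ha h hw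
  have hc : ((residueGraph hR).induce s).Coloring (Bool × Bool) :=
    SimpleGraph.Coloring.mk c (by
      rintro u v ⟨a, ha, h | h⟩
      · exact main u v a ha h
      · exact (main v u a ha h).symm)
  simpa using hc.colorable

/-- **Carbonero–Hompe–Moore–Spirkl.** There are `K₄`-free graphs of arbitrarily large
chromatic number all of whose triangle-free induced subgraphs are `4`-colourable. -/
theorem carbonero_hompe_moore_spirkl (r : ℕ) :
    ∃ (V : Type) (_ : Fintype V) (G : SimpleGraph V),
      G.CliqueFree 4 ∧
      (r : ℕ∞) < G.chromaticNumber ∧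
      ∀ s : Set V, (G.induce s).CliqueFree 3 → (G.induce s).chromaticNumber ≤ 4 := by
  obtain ⟨V, _, R, hR, hcol⟩ := exists_isPathResidue r
  refine ⟨V, inferInstance, residueGraph hR, residueGraph_cliqueFree hR, ?_, fun s hs =>
    (residueGraph_induce_colorable hR s hs).chromaticNumber_le⟩
  by_contra! hle
  obtain ⟨c⟩ := SimpleGraph.chromaticNumber_le_iff_colorable.1 hle
  obtain ⟨u, v, huv, he⟩ := hcol c
  exact c.valid ⟨1, one_ne_zero, Or.inl huv⟩ he
end

section
/- For every natural number r there exists a finite 3-uniform hypergraph H whose chromatic number is at least r and such that every linear subhypergraph of H is 2-colourable; that is, for every subset E' of the edges of H in which any two distinct edges share at most one vertex, the hypergraph (V(H), E') admits a proper colouring with 2 colours. -/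
/-!
The hypergraph is built by induction on the number `c` of colours to be defeated. Given `H` on `V`
that has no proper `c`-colouring, take a set `A` of `c + 2` new vertices and, for every pair
`a, b ∈ A`, a copy `H_ab` of `H`; for `a ≠ b` add every edge `{a, b, v}` with `v ∈ H_ab`.

* A colouring with `c + 1` colours gives two vertices `a ≠ b` of `A` the same colour `k`. Either
  some vertex of `H_ab` has colour `k`, and it forms a monochromatic edge with `a, b`, or `H_ab`
  is coloured with the remaining `c` colours and has a monochromatic edge (`extend_not_colourable`).
* In a linear subhypergraph each pair `a, b` lies in at most one edge `{a, b, v}`. Colour all of `A`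
  with `0` and each `H_ab` by a proper `2`-colouring of what is left of it, interchanging the two
  colours if necessary so that this one vertex `v` gets colour `1` (`extend_linear`).
-/

namespace ErdosGalvinHajnal

/-- Every linear subfamily of the edge set `E` is properly `2`-colourable. -/
def LinearTwoColourable {V : Type} [DecidableEq V] (E : Finset (Finset V)) : Prop :=
  ∀ E' ⊆ E, (∀ e ∈ E', ∀ e' ∈ E', e ≠ e' → (e ∩ e').card ≤ 1) →
    ∃ f : V → Fin 2, ∀ e ∈ E', ∃ x ∈ e, ∃ y ∈ e, f x ≠ f y

/-- Vertices of the extended hypergraph: the new vertices `A`, and one copy of `V` for each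
ordered pair of elements of `A`. -/
abbrev Ext (A V : Type) : Type := A ⊕ (A × A) × V

/-- The inclusion of `V` as the copy indexed by the pair `p`. -/
def copyEmb {A V : Type} (p : A × A) : V ↪ Ext A V :=
  ⟨fun v => Sum.inr (p, v), fun v w h => by simpa using h⟩

/-- The edge joining the pair `p` of new vertices to the vertex `v` of the copy indexed by `p`. -/
def joinEdge {A V : Type} [DecidableEq A] [DecidableEq V] (p : A × A) (v : V) :
    Finset (Ext A V) :=
  {Sum.inl p.1, Sum.inl p.2, Sum.inr (p, v)}

/-- The edges of the extended hypergraph: copies of the edges of `E`, and the joining edges. -/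
def extEdges (A : Type) {V : Type} [Fintype A] [DecidableEq A] [Fintype V] [DecidableEq V]
    (E : Finset (Finset V)) : Finset (Finset (Ext A V)) :=
  (Finset.univ ×ˢ E).image (fun q : (A × A) × Finset V => q.2.map (copyEmb q.1)) ∪
  (Finset.univ.filter (fun q : (A × A) × V => q.1.1 ≠ q.1.2)).image
    (fun q => joinEdge q.1 q.2)

section

variable {A V : Type} [Fintype A] [DecidableEq A] [Fintype V] [DecidableEq V]
  {E : Finset (Finset V)}

lemma mem_extEdges {e : Finset (Ext A V)} :
    e ∈ extEdges A E ↔ (∃ p : A × A, ∃ d ∈ E, d.map (copyEmb p) = e) ∨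
      (∃ p : A × A, ∃ v : V, p.1 ≠ p.2 ∧ joinEdge p v = e) := by
  simp [extEdges]

lemma extEdges_card (hE : ∀ e ∈ E, e.card = 3) : ∀ e ∈ extEdges A E, e.card = 3 := by
  intro e he
  rcases mem_extEdges.1 he with ⟨p, d, hd, rfl⟩ | ⟨p, v, hp, rfl⟩
  · simpa using hE d hd
  · exact Finset.card_eq_three.2 ⟨_, _, _, by simpa using hp, by simp, by simp, rfl⟩

lemma extend_not_colourable {c : ℕ} (hA : c + 1 < Fintype.card A)
    (hE : ∀ f : V → Fin c, ∃ e ∈ E, ∀ x ∈ e, ∀ y ∈ e, f x = f y)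
    (f : Ext A V → Fin (c + 1)) :
    ∃ e ∈ extEdges A E, ∀ x ∈ e, ∀ y ∈ e, f x = f y := by
  obtain ⟨a, b, hab, hf⟩ := Fintype.exists_ne_map_eq_of_card_lt
    (fun a : A => f (Sum.inl a)) (by simpa using hA)
  by_cases h : ∃ v, f (Sum.inr ((a, b), v)) = f (Sum.inl a)
  · obtain ⟨v, hv⟩ := h
    refine ⟨joinEdge (a, b) v, mem_extEdges.2 (Or.inr ⟨(a, b), v, hab, rfl⟩), ?_⟩
    have key : ∀ x ∈ joinEdge (a, b) v, f x = f (Sum.inl a) := by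
      intro x hx
      simp only [joinEdge, Finset.mem_insert, Finset.mem_singleton] at hx
      rcases hx with rfl | rfl | rfl
      · rfl
      · exact hf.symm
      · exact hv
    intro x hx y hy
    rw [key x hx, key y hy]
  · push Not at h
    -- the colours on this copy avoid `f a`, so they can be renamed to lie in `Fin c`
    choose g hg using fun v => Fin.exists_succAbove_eq (h v)
    obtain ⟨e, he, hmono⟩ := hE g
    refine ⟨e.map (copyEmb (a, b)), mem_extEdges.2 (Or.inl ⟨(a, b), e, he, rfl⟩), ?_⟩
    intro x hx y hy
    obtain ⟨v, hv, rfl⟩ := Finset.mem_map.1 hx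
    obtain ⟨w, hw, rfl⟩ := Finset.mem_map.1 hy
    change f (Sum.inr ((a, b), v)) = f (Sum.inr ((a, b), w))
    rw [← hg v, ← hg w, hmono v hv w hw]

lemma extend_linear (hE : LinearTwoColourable E) : LinearTwoColourable (extEdges A E) := by
  intro F hF hlin
  -- in a linear family, a pair of new vertices lies in at most one joining edge
  have huniq : ∀ p : A × A, p.1 ≠ p.2 → ∀ v w : V,
      joinEdge p v ∈ F → joinEdge p w ∈ F → v = w := by
    intro p hp v w hv hw
    by_contra hvw
    have hne : joinEdge p v ≠ joinEdge p w := by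
      intro h
      have : Sum.inr (p, v) ∈ joinEdge p w := by rw [← h]; simp [joinEdge]
      simp [joinEdge] at this
      exact hvw this
    have h1 := hlin _ hv _ hw hne
    have h2 : ({Sum.inl p.1, Sum.inl p.2} : Finset (Ext A V)) ⊆
        joinEdge p v ∩ joinEdge p w := by
      intro x hx
      simp only [Finset.mem_insert, Finset.mem_singleton] at hx
      rcases hx with rfl | rfl <;> simp [joinEdge]
    have h3 := Finset.card_le_card h2
    rw [Finset.card_pair (by simpa using hp)] at h3
    omega
  have hcopy : ∀ p : A × A, ∃ g : V → Fin 2,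
      (∀ e, e.map (copyEmb p) ∈ F → e ∈ E → ∃ x ∈ e, ∃ y ∈ e, g x ≠ g y) ∧
      (p.1 ≠ p.2 → ∀ v, joinEdge p v ∈ F → g v = 1) := by
    intro p
    obtain ⟨g, hg⟩ := hE (E.filter (fun e => e.map (copyEmb p) ∈ F))
      (Finset.filter_subset _ _) (by
        intro e he e' he' hne
        have := hlin _ (Finset.mem_filter.1 he).2 _ (Finset.mem_filter.1 he').2
          (fun h => hne (Finset.map_injective _ h))
        rwa [← Finset.map_inter, Finset.card_map] at this)
    have hg' : ∀ e, e.map (copyEmb p) ∈ F → e ∈ E → ∃ x ∈ e, ∃ y ∈ e, g x ≠ g y :=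
      fun e h1 h2 => hg e (Finset.mem_filter.2 ⟨h2, h1⟩)
    by_cases h : p.1 ≠ p.2 ∧ ∃ v, joinEdge p v ∈ F
    · obtain ⟨hp, v, hv⟩ := h
      -- adding a constant modulo `2` interchanges the colours exactly when `g v = 0`
      refine ⟨fun w => g w + (1 - g v), ?_, ?_⟩
      · intro e h1 h2
        obtain ⟨x, hx, y, hy, hxy⟩ := hg' e h1 h2
        exact ⟨x, hx, y, hy, fun h => hxy (add_right_cancel h)⟩
      · intro _ w hw
        rw [huniq p hp w v hw hv]
        exact add_sub_cancel (g v) 1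
    · exact ⟨g, hg', fun hp v hv => absurd ⟨hp, v, hv⟩ h⟩
  choose g hg1 hg2 using hcopy
  refine ⟨Sum.elim (fun _ => 0) (fun q => g q.1 q.2), ?_⟩
  intro e he
  rcases mem_extEdges.1 (hF he) with ⟨p, d, hd, rfl⟩ | ⟨p, v, hp, rfl⟩
  · obtain ⟨x, hx, y, hy, hxy⟩ := hg1 p d he hd
    exact ⟨copyEmb p x, Finset.mem_map_of_mem _ hx, copyEmb p y, Finset.mem_map_of_mem _ hy, hxy⟩
  · refine ⟨Sum.inl p.1, by simp [joinEdge], Sum.inr (p, v), by simp [joinEdge], ?_⟩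
    simp [hg2 p hp v he]

end

lemma exists_hypergraph (c : ℕ) :
    ∃ (V : Type) (_ : Fintype V) (_ : DecidableEq V) (E : Finset (Finset V)),
      (∀ e ∈ E, e.card = 3) ∧
      (∀ f : V → Fin c, ∃ e ∈ E, ∀ x ∈ e, ∀ y ∈ e, f x = f y) ∧
      LinearTwoColourable E := by
  induction c with
  | zero =>
    -- with no colours available, a single vertex cannot be coloured at all
    refine ⟨Unit, inferInstance, inferInstance, ∅, by simp, fun f => (f ()).elim0, ?_⟩
    intro E' hE' _
    exact ⟨fun _ => 0, fun e he => absurd (hE' he) (by simp)⟩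
  | succ c ih =>
    obtain ⟨V, _, _, E, h1, h2, h3⟩ := ih
    exact ⟨Ext (Fin (c + 2)) V, inferInstance, inferInstance, extEdges (Fin (c + 2)) E,
      extEdges_card h1, extend_not_colourable (by simp) h2, extend_linear h3⟩

end ErdosGalvinHajnal

/-- **Erdős–Galvin–Hajnal.** For every `r` there is a finite `3`-uniform hypergraph with
chromatic number at least `r` (no proper colouring with fewer than `r` colours) all of
whose linear subhypergraphs are `2`-colourable. -/
theorem erdos_galvin_hajnal (r : ℕ) :
    ∃ (V : Type) (_ : Fintype V) (_ : DecidableEq V) (E : Finset (Finset V)),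
      (∀ e ∈ E, e.card = 3) ∧
      (∀ c : ℕ, c < r → ∀ f : V → Fin c, ∃ e ∈ E, ∀ x ∈ e, ∀ y ∈ e, f x = f y) ∧
      (∀ E' ⊆ E, (∀ e ∈ E', ∀ e' ∈ E', e ≠ e' → (e ∩ e').card ≤ 1) →
        ∃ f : V → Fin 2, ∀ e ∈ E', ∃ x ∈ e, ∃ y ∈ e, f x ≠ f y) := by
  obtain ⟨V, i1, i2, E, h1, h2, h3⟩ := ErdosGalvinHajnal.exists_hypergraph r
  refine ⟨V, i1, i2, E, h1, ?_, h3⟩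
  intro c hc f
  obtain ⟨e, he, hmono⟩ := h2 (fun v => Fin.castLE hc.le (f v))
  exact ⟨e, he, fun x hx y hy => Fin.castLE_injective hc.le (hmono x hx y hy)⟩
end

section
/- For every infinite cardinal κ there exists a triangle-free simple graph G on a vertex set of cardinality κ whose chromatic number is κ; that is, G admits no proper vertex colouring with fewer than κ colours (for every type of colours of cardinality less than κ there is no colouring of V(G) in which adjacent vertices always receive distinct colours). -/
universe u

/-!
The graph is Specker's: its vertices are the triples over the well-order `κ.ord`, and `x`, `y` are
joined when `x₀ < x₁ < y₀ < x₂ < y₁ < y₂`, or the same with `x` and `y` exchanged.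

It is triangle-free: in a triangle the three vertices can be named `x`, `y`, `z` in increasing order
of first coordinate, and then the edges `xy`, `yz` give `x₂ < y₁ < z₀`, whereas the edge `xz` asks
for `z₀ < x₂`.

It has no proper colouring with `μ < κ` colours: there is a regular `ν` with `μ < ν ≤ κ` (`ℵ₀` if
`μ` is finite, `μ⁺` otherwise), and it suffices to colour triples from an initial segment of type
`ν.ord`. Since `μ` is less than the cofinality, every `μ`-colouring of the segment has a colour used
cofinally often (`exists_cofinal_colour`). Applying this to the third, second and first coordinate
in turn yields a colour `i` such that for cofinally many `a`, for cofinally many `b`, for cofinally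
many `c`, the triple `(a, b, c)` has colour `i`. The entries of two adjacent triples of colour `i`
can then be chosen one after the other, in the order `x₀, x₁, y₀, x₂, y₁, y₂`.
-/

/-- The ordered form of adjacency in Specker's graph: the entries of `x` and `y` interleave as
`x₀ < x₁ < y₀ < x₂ < y₁ < y₂`. -/
def SpeckerRel {I : Type u} [LinearOrder I] (x y : I × I × I) : Prop :=
  x.1 < x.2.1 ∧ x.2.1 < y.1 ∧ y.1 < x.2.2 ∧ x.2.2 < y.2.1 ∧ y.2.1 < y.2.2

/-- Specker's graph on the triples of elements of a linear order. Triples that are not strictly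
increasing are isolated vertices. -/
def speckerGraph (I : Type u) [LinearOrder I] : SimpleGraph (I × I × I) where
  Adj x y := SpeckerRel x y ∨ SpeckerRel y x
  symm := ⟨fun _ _ h => h.symm⟩
  loopless := ⟨fun x h => by
    have h' : SpeckerRel x x := h.elim id id
    exact lt_asymm h'.1 h'.2.1⟩

theorem speckerGraph_cliqueFree (I : Type u) [LinearOrder I] :
    (speckerGraph I).CliqueFree 3 := by
  intro s hs
  obtain ⟨x, y, z, hxy, hxz, hyz, -⟩ := SimpleGraph.is3Clique_iff.mp hs
  simp only [speckerGraph, SpeckerRel] at hxy hxz hyz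
  grind

/-- Pigeonhole principle: a colouring with fewer than `cof J` colours has a colour that occurs
cofinally often. -/
theorem exists_cofinal_colour {J C : Type u} [LinearOrder J] (h : Cardinal.mk C < Order.cof J)
    (g : J → C) : ∃ i, ∀ a, ∃ b, a < b ∧ g b = i := by
  by_contra! hcon
  choose a ha using hcon
  have hnot : ¬ IsCofinal (Set.range a) := fun hc =>
    ((Order.cof_le hc).trans Cardinal.mk_range_le).not_gt h
  simp only [IsCofinal, Set.exists_range_iff] at hnot
  push Not at hnot
  obtain ⟨b, hb⟩ := hnot
  exact ha (g b) b (hb (g b)) rfl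

theorem exists_speckerRel_monochromatic {J C : Type u} [LinearOrder J] [Nonempty J]
    (h : Cardinal.mk C < Order.cof J) (f : J × J × J → C) :
    ∃ x y, SpeckerRel x y ∧ f x = f y := by
  choose g hg using fun a b => exists_cofinal_colour h fun c => f (a, b, c)
  choose k hk using fun a => exists_cofinal_colour h fun b => g a b
  obtain ⟨i, hi⟩ := exists_cofinal_colour h k
  obtain ⟨x₀, -, hx₀⟩ := hi (Classical.arbitrary J)
  obtain ⟨x₁, h₁, hx₁⟩ := hk x₀ x₀
  obtain ⟨y₀, h₂, hy₀⟩ := hi x₁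
  obtain ⟨x₂, h₃, hx₂⟩ := hg x₀ x₁ y₀
  obtain ⟨y₁, h₄, hy₁⟩ := hk y₀ x₂
  obtain ⟨y₂, h₅, hy₂⟩ := hg y₀ y₁ y₁
  exact ⟨(x₀, x₁, x₂), (y₀, y₁, y₂), ⟨h₁, h₂, h₃, h₄, h₅⟩,
    by rw [hx₂, hx₁, hx₀, hy₂, hy₁, hy₀]⟩

theorem exists_isRegular_between {μ κ : Cardinal.{u}} (hκ : Cardinal.aleph0 ≤ κ) (hμ : μ < κ) :
    ∃ ν : Cardinal.{u}, ν.IsRegular ∧ μ < ν ∧ ν ≤ κ := by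
  rcases lt_or_ge μ Cardinal.aleph0 with hfin | hinf
  · exact ⟨_, Cardinal.isRegular_aleph0, hfin, hκ⟩
  · exact ⟨_, Cardinal.isRegular_succ hinf, Order.lt_succ μ, Order.succ_le_of_lt hμ⟩

/-- **Erdős–Rado.** For every infinite cardinal `κ` there exists a triangle-free graph on
`κ` vertices with chromatic number `κ`: it admits no proper colouring with fewer than `κ`
colours. -/
theorem erdos_rado_triangle_free (κ : Cardinal.{u}) (hκ : Cardinal.aleph0 ≤ κ) :
    ∃ (V : Type u) (G : SimpleGraph V),
      Cardinal.mk V = κ ∧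
      G.CliqueFree 3 ∧
      ∀ (C : Type u), Cardinal.mk C < κ →
        ∀ f : V → C, ∃ x y, G.Adj x y ∧ f x = f y := by
  refine ⟨_, speckerGraph κ.ord.ToType, ?_, speckerGraph_cliqueFree _, fun C hC f => ?_⟩
  · simp [Cardinal.mul_eq_self hκ]
  · obtain ⟨ν, hreg, hCν, hνκ⟩ := exists_isRegular_between hκ hC
    have hne : Nonempty ν.ord.ToType := by
      rw [← Cardinal.mk_ne_zero_iff, Cardinal.mk_ord_toType]
      exact hreg.ne_zero
    have hcof : Cardinal.mk C < Order.cof ν.ord.ToType := by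
      rwa [Ordinal.cof_toType, hreg.cof_ord]
    have hle : Ordinal.type (α := ν.ord.ToType) (· < ·) ≤
        Ordinal.type (α := κ.ord.ToType) (· < ·) := by
      rw [Ordinal.type_toType, Ordinal.type_toType]
      exact Cardinal.ord_le_ord.mpr hνκ
    obtain ⟨e⟩ := Ordinal.type_le_iff'.mp hle
    obtain ⟨x, y, ⟨h₁, h₂, h₃, h₄, h₅⟩, hf⟩ :=
      exists_speckerRel_monochromatic hcof fun x => f (e x.1, e x.2.1, e x.2.2)
    exact ⟨_, _, Or.inl ⟨e.map_rel_iff.mpr h₁, e.map_rel_iff.mpr h₂, e.map_rel_iff.mpr h₃,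
      e.map_rel_iff.mpr h₄, e.map_rel_iff.mpr h₅⟩, hf⟩
end

section
/- For every positive integer k and every cardinal κ there exists a simple graph G containing no cycle of odd length at most 2k+1 (i.e., no subgraph isomorphic to C₃, C₅, …, C_{2k+1}) such that G admits no proper vertex colouring with fewer than κ colours. -/
universe u

/-! The vertices are sequences in an order `α` in which every family indexed by fewer than `κ`
colours has a strict upper bound (an initial ordinal of regular cardinality). With `s = k + 1`,
two sequences are joined when, on a long initial segment, one interlaces the other with shift `s`:
`x (i + s) < y i < x (i + s + 1)`.

*Short odd cycles.* Traversing an edge forwards compares index `i` of `y` with index `i + s` of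
`x`, traversing it backwards compares it with index `i - (s + 1)`. A closed walk with `a` forward
and `b` backward edges hence yields `x (i + s * a - (s + 1) * b) ≤ x i`, and the reverse walk the
same with `a` and `b` swapped (`walk_compare`). If `a + b` is odd and at most `2 * k + 1`, one of
the two index shifts is positive, which contradicts the strict monotonicity forced by an edge.

*Chromatic number.* By pigeonhole at each coordinate, for every colouring there is a colour `c`
such that coordinates can be chosen one after another, each above any prescribed bound, with the
outcome always coloured `c` (`Good`, `exists_good`). Building two sequences in parallel, each new
coordinate above the last one of the other sequence, produces adjacent vertices of colour `c`. -/

namespace OddGirth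

variable {α : Type u} [Preorder α]

/-- `y` interlaces `x` with shift `s` on the first `n` indices of `y`. -/
def Interlace (s n : ℕ) (x y : ℕ → α) : Prop :=
  ∀ i < n, x (i + s) < y i ∧ y i < x (i + s + 1)

/-- The graph on sequences in `α` whose edges are the interlacing pairs. -/
def shiftGraph (α : Type u) [Preorder α] (s n : ℕ) : SimpleGraph (ℕ → α) :=
  SimpleGraph.fromRel (Interlace s n)

/-! ### Short odd cycles -/

lemma lt_of_lt_succ {x : ℕ → α} {s n : ℕ} (h : ∀ i, s ≤ i → i + 1 < n → x i < x (i + 1))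
    {i j : ℕ} (hi : s ≤ i) (hij : i < j) (hj : j < n) : x i < x j := by
  induction j, hij using Nat.le_induction with
  | base => exact h i hi hj
  | succ j hij ih => exact (ih (by omega)).trans (h j (by omega) hj)

lemma Interlace.lt_left {s n : ℕ} {x y : ℕ → α} (h : Interlace s n x y) {i : ℕ}
    (hi : s ≤ i) (hn : i + 1 < n) : x i < x (i + 1) := by
  obtain ⟨h1, h2⟩ := h (i - s) (by omega)
  rw [Nat.sub_add_cancel hi] at h1 h2
  exact h1.trans h2

lemma Interlace.lt_right {s n : ℕ} {x y : ℕ → α} (h : Interlace s n x y) {i : ℕ}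
    (hn : i + 1 < n) : y i < y (i + 1) := by
  have h1 := (h i (by omega)).2
  have h2 := (h (i + 1) hn).1
  rw [show i + 1 + s = i + s + 1 by omega] at h2
  exact h1.trans h2

/-- The endpoints of a walk with `a` forward and `b` backward edges are comparable along a shift
by `s * a - (s + 1) * b`, away from both ends of the index range. -/
lemma walk_compare {s n : ℕ} {x z : ℕ → α} (w : (shiftGraph α s n).Walk x z) :
    ∃ a b, a + b = w.length ∧ ∀ i j, s * a + s * b + a + b ≤ i → i + (s * a + s * b + a + b) < n →
      (j + (s * b + b) = i + s * a → x j ≤ z i) ∧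
      (j + (s * a + a) = i + s * b → z j ≤ x i) := by
  induction w with
  | nil =>
    refine ⟨0, 0, rfl, fun i j _ _ => ⟨fun h => ?_, fun h => ?_⟩⟩ <;>
    · obtain rfl : j = i := by simpa using h
      exact le_rfl
  | @cons x v z hadj w ih =>
    obtain ⟨a, b, hab, ih⟩ := ih
    have hadj' : x ≠ v ∧ (Interlace s n x v ∨ Interlace s n v x) := hadj
    obtain ⟨-, h | h⟩ := hadj'
    · refine ⟨a + 1, b, by rw [SimpleGraph.Walk.length_cons]; omega, fun i j h1 h2 => ⟨fun hj => ?_, fun hj => ?_⟩⟩ <;>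
        rw [Nat.mul_succ] at *
      · have hs : s ≤ j := by omega
        have := (h (j - s) (by omega)).1
        rw [Nat.sub_add_cancel hs] at this
        exact this.le.trans ((ih i (j - s) (by omega) (by omega)).1 (by omega))
      · have := (h (i - (s + 1)) (by omega)).2
        rw [show i - (s + 1) + s + 1 = i by omega] at this
        exact ((ih (i - (s + 1)) j (by omega) (by omega)).2 (by omega)).trans this.le
    · refine ⟨a, b + 1, by rw [SimpleGraph.Walk.length_cons]; omega, fun i j h1 h2 => ⟨fun hj => ?_, fun hj => ?_⟩⟩ <;>
        rw [Nat.mul_succ] at *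
      · have := (h j (by omega)).2
        exact this.le.trans ((ih i (j + s + 1) (by omega) (by omega)).1 (by omega))
      · have := (h i (by omega)).1
        exact ((ih (i + s) j (by omega) (by omega)).2 (by omega)).trans this.le

lemma no_short_odd_closed_walk {k n : ℕ} (hn : 4 * ((k + 2) * (2 * k + 1)) ≤ n) {x : ℕ → α}
    (w : (shiftGraph α (k + 1) n).Walk x x) (hodd : Odd w.length)
    (hlen : w.length ≤ 2 * k + 1) : False := by
  obtain ⟨a, b, hab, h⟩ := walk_compare w
  -- the base vertex lies on an edge, which makes it strictly increasing from index `k + 1` on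
  have hx : ∀ i, k + 1 ≤ i → i + 1 < n → x i < x (i + 1) := by
    cases w with
    | nil => simp at hodd
    | cons hadj w =>
      obtain ⟨-, h | h⟩ := hadj
      · exact fun i hi hi' => h.lt_left hi hi'
      · exact fun i _ hi' => h.lt_right hi'
  set M := (k + 2) * (2 * k + 1) with hM
  have hkM : k + 2 ≤ M := Nat.le_mul_of_pos_right _ (by omega)
  have hbound : (k + 1) * a + (k + 1) * b + a + b ≤ M := by
    calc _ = (k + 2) * (a + b) := by ring
      _ ≤ M := Nat.mul_le_mul_left _ (by omega)
  rcases lt_or_ge b a with hlt | hge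
  · obtain ⟨e, rfl⟩ := Nat.exists_eq_add_of_lt hlt
    have hexp : (k + 1) * (b + e + 1) = (k + 1) * b + (k + 1) * e + (k + 1) := by ring
    have := (h M (M + (k + 1) * (b + e + 1) - ((k + 1) * b + b)) hbound (by omega)).1 (by omega)
    exact (lt_of_lt_succ hx (by omega) (by omega) (by omega)).not_ge this
  · have hne : a ≠ b := by
      rintro rfl
      rw [← hab] at hodd
      exact (Nat.not_odd_iff_even.2 ⟨a, rfl⟩) hodd
    obtain ⟨e, rfl⟩ := Nat.exists_eq_add_of_lt (lt_of_le_of_ne hge hne)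
    have hexp : (k + 1) * (a + e + 1) = (k + 1) * a + (k + 1) * e + (k + 1) := by ring
    have := (h M (M + (k + 1) * (a + e + 1) - ((k + 1) * a + a)) hbound (by omega)).2 (by omega)
    exact (lt_of_lt_succ hx (by omega) (by omega) (by omega)).not_ge this

/-! ### Chromatic number -/

/-- `Good P p r x`: the coordinates of `x` at `p, …, p + r - 1` can be re-chosen successively, each
above an arbitrary bound prescribed at that stage, so that the result satisfies `P`. -/
def Good (P : (ℕ → α) → Prop) : ℕ → ℕ → (ℕ → α) → Prop
  | _, 0, x => P x
  | p, r + 1, x => ∀ b, ∃ a, b < a ∧ Good P (p + 1) r (Function.update x p a)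

lemma exists_good {C : Type u} (hα : ∀ g : C → α, ∃ a, ∀ c, g c < a) (f : (ℕ → α) → C)
    (r : ℕ) : ∀ p x, ∃ c, Good (fun y => f y = c) p r x := by
  induction r with
  | zero => exact fun _ x => ⟨f x, rfl⟩
  | succ r ih =>
    intro p x
    by_contra! hcon
    simp only [Good] at hcon
    push Not at hcon
    choose g hg using hcon
    obtain ⟨a, ha⟩ := hα g
    obtain ⟨c, hc⟩ := ih (p + 1) (Function.update x p a)
    exact hg c a (ha c) hc

lemma Good.advance [Nonempty α] {P : (ℕ → α) → Prop} {p r : ℕ} (q : ℕ) {x : ℕ → α}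
    (h : Good P p (q + r) x) :
    ∃ y, (∀ i < p, y i = x i) ∧ Good P (p + q) r y := by
  induction q generalizing p x with
  | zero => exact ⟨x, fun _ _ => rfl, by simpa using h⟩
  | succ q ih =>
    rw [Nat.succ_add_eq_add_succ, Nat.add_succ] at h
    obtain ⟨a, -, ha⟩ := h (Classical.arbitrary α)
    obtain ⟨y, hy, hy'⟩ := ih ha
    refine ⟨y, fun i hi => ?_, by convert hy' using 1; omega⟩
    rw [hy i (by omega), Function.update_of_ne (by omega)]

lemma Good.exists_interlace [Nonempty α] {P : (ℕ → α) → Prop} {s n : ℕ} {x₀ : ℕ → α}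
    (h : Good P 0 (s + 1 + n) x₀) : ∃ x y, P x ∧ P y ∧ Interlace s n x y := by
  -- after `t` rounds, `x` is settled on `s + 1 + t` coordinates and `y` on `t` coordinates
  have key : ∀ t r, t + r = n → ∃ x y, Good P (s + 1 + t) r x ∧ Good P t (s + 1 + r) y ∧
      Interlace s t x y := by
    intro t
    induction t with
    | zero =>
      rintro r hr
      obtain rfl : r = n := by omega
      obtain ⟨x, -, hx⟩ := h.advance
      exact ⟨x, x₀, by simpa using hx, h, fun i hi => absurd hi (by omega)⟩
    | succ t ih =>
      intro r hr
      obtain ⟨x, y, hx, hy, hxy⟩ := ih (r + 1) (by omega)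
      obtain ⟨a, ha, hy⟩ := hy (x (t + s))
      obtain ⟨b, hb, hx⟩ := hx a
      refine ⟨_, _, hx, hy, fun i hi => ?_⟩
      rcases Nat.lt_succ_iff_lt_or_eq.1 hi with hi | rfl
      · rw [Function.update_of_ne (by omega), Function.update_of_ne (by omega),
          Function.update_of_ne (by omega)]
        exact hxy i hi
      · rw [Function.update_of_ne (by omega), Function.update_self,
          show i + s + 1 = s + 1 + i by omega, Function.update_self]
        exact ⟨ha, hb⟩
  obtain ⟨x, y, hx, hy, hxy⟩ := key n 0 rfl
  obtain ⟨y', hyy', hy'⟩ := Good.advance (s + 1) hy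
  refine ⟨x, y', hx, hy', fun i hi => ?_⟩
  rw [hyy' i hi]
  exact hxy i hi

lemma Interlace.ne {s n : ℕ} {x y : ℕ → α} (hs : 0 < s) (hn : 2 * s < n)
    (h : Interlace s n x y) : x ≠ y := by
  rintro rfl
  have hlt : x s < x (s + s) :=
    lt_of_lt_succ (x := x) (s := s) (n := n) (fun i hi hi' => h.lt_left hi hi') le_rfl
      (by omega) (by omega)
  exact hlt.asymm (h s (by omega)).1

lemma exists_strict_upper_bound {c : Cardinal.{u}} (hc : c.IsRegular) {C : Type u}
    (hC : Cardinal.mk C < c) (g : C → c.ord.ToType) : ∃ a, ∀ i, g i < a := by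
  by_contra! hcon
  have hcof : IsCofinal (Set.range g) := fun a => by
    obtain ⟨i, hi⟩ := hcon a
    exact ⟨g i, ⟨i, rfl⟩, hi⟩
  have := (Order.cof_le hcof).trans Cardinal.mk_range_le
  rw [Ordinal.cof_toType, hc.cof_ord] at this
  exact this.not_gt hC

end OddGirth

open OddGirth

/-- **Erdős–Hajnal.** For every positive integer `k` and every cardinal `κ` there is a graph
with no cycle of odd length at most `2k+1` that admits no proper colouring with fewer
than `κ` colours. -/
theorem erdos_hajnal_odd_girth (k : ℕ) (hk : 0 < k) (κ : Cardinal.{u}) :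
    ∃ (V : Type u) (G : SimpleGraph V),
      (∀ m : ℕ, Odd m → m ≤ 2 * k + 1 →
        ¬ ∃ (x : V) (w : G.Walk x x), w.IsCycle ∧ w.length = m) ∧
      ∀ (C : Type u), Cardinal.mk C < κ →
        ∀ f : V → C, ∃ x y, G.Adj x y ∧ f x = f y := by
  set c : Cardinal.{u} := Order.succ (max κ Cardinal.aleph0) with hc_def
  have hc : c.IsRegular := Cardinal.isRegular_succ (le_max_right _ _)
  have hκ : κ < c := (le_max_left _ _).trans_lt (Order.lt_succ _)
  have : Nonempty c.ord.ToType :=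
    (exists_strict_upper_bound hc (C := PEmpty) (by simpa using hc.pos) PEmpty.elim).nonempty
  set n := 4 * ((k + 2) * (2 * k + 1)) with hn
  refine ⟨ℕ → c.ord.ToType, shiftGraph _ (k + 1) n, ?_, fun C hC f => ?_⟩
  · rintro m hodd hm ⟨x, w, -, rfl⟩
    exact no_short_odd_closed_walk le_rfl w hodd hm
  · obtain ⟨d, hd⟩ := exists_good (exists_strict_upper_bound hc (hC.trans hκ)) f (k + 1 + 1 + n) 0
      (fun _ => Classical.arbitrary _)
    obtain ⟨x, y, hx, hy, hxy⟩ := hd.exists_interlace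
    have hlarge : 2 * (k + 1) < n := by
      have : k + 2 ≤ (k + 2) * (2 * k + 1) := Nat.le_mul_of_pos_right _ (by omega)
      omega
    exact ⟨x, y, ⟨hxy.ne k.succ_pos hlarge, Or.inl hxy⟩, hx.trans hy.symm⟩
end

section
/- Let G be a simple graph that admits no proper vertex colouring with countably many colours (i.e., there is no function from V(G) to ℕ giving adjacent vertices distinct values). Then for every natural number n, G contains a complete bipartite subgraph K_{n,ℵ₁}: there are disjoint sets A, B of vertices with |A| = n and |B| = ℵ₁ such that every vertex of A is adjacent to every vertex of B. -/
universe u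

/-!
Suppose `G` contains no `K_{n, ℵ₁}`, so that every `n`-set of vertices has only countably many common
neighbours. Then the edges of `G` can be oriented along a well-founded relation in such a way that
every vertex has only finitely many neighbours below it (`exists_orientation`), and the greedy
colouring along that relation uses only natural numbers as colours (`exists_coloring`).

The orientation is found by induction on the number `κ` of vertices. A countable vertex set is
enumerated. If `κ` is uncountable, well-order the vertices in type `κ.ord`, and let `C s` be the
closure of the initial segment up to `s` under taking common neighbours of `n`-sets. As these
common neighbour sets are countable, `C s` has fewer than `κ` elements (`mk_hull_le`), so the
induction hypothesis applies to it. Let the rank of `v` be the least `s` with `v ∈ C s`; compare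
vertices first by rank, and within one rank `s` by the orientation of `C s`. A vertex `v` of rank `s`
has only finitely many neighbours of smaller rank: otherwise `n` of them would lie in a common `C t`
with `t < s`, which would then contain `v`.
-/

namespace ErdosHajnal

open Cardinal

variable {W : Type u}

/-- The set of common neighbours of the vertices in `A`. -/
def common (H : SimpleGraph W) (A : Finset W) : Set W := {v | ∀ a ∈ A, H.Adj a v}

/-- One closure step: add to `X` the common neighbours of all its `n`-element subsets. -/
def step (H : SimpleGraph W) (n : ℕ) (X : Set W) : Set W :=
  X ∪ ⋃ A : {A : Finset X // A.card = n}, common H (A.1.map (Function.Embedding.subtype _))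

/-- The closure of `X` under common neighbours of `n`-element subsets. -/
def hull (H : SimpleGraph W) (n : ℕ) (X : Set W) : Set W := ⋃ k : ℕ, (step H n)^[k] X

lemma subset_hull (H : SimpleGraph W) (n : ℕ) (X : Set W) : X ⊆ hull H n X :=
  fun _ hx => Set.mem_iUnion.2 ⟨0, hx⟩

lemma common_subset_step (H : SimpleGraph W) (n : ℕ) (X : Set W) (A : Finset W)
    (hA : A.card = n) (hAX : (A : Set W) ⊆ X) : common H A ⊆ step H n X := by
  classical
  intro v hv
  refine Or.inr (Set.mem_iUnion.2 ⟨⟨A.subtype (· ∈ X), ?_⟩, ?_⟩)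
  · rw [Finset.card_subtype, Finset.filter_true_of_mem (fun x hx => hAX hx), hA]
  · intro a ha
    simp only [Finset.mem_map, Finset.mem_subtype] at ha
    obtain ⟨b, hb, rfl⟩ := ha
    exact hv _ hb

lemma iterate_step_mono (H : SimpleGraph W) (n : ℕ) (X : Set W) :
    Monotone fun k => (step H n)^[k] X := by
  refine monotone_nat_of_le_succ fun k => ?_
  rw [Function.iterate_succ_apply']
  exact Set.subset_union_left

/-- As `A` is finite, it already lies in a finite stage of the closure. -/
lemma common_subset_hull (H : SimpleGraph W) (n : ℕ) (X : Set W) (A : Finset W)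
    (hA : A.card = n) (hAX : (A : Set W) ⊆ hull H n X) : common H A ⊆ hull H n X := by
  obtain ⟨k, hk⟩ : ∃ k, (A : Set W) ⊆ (step H n)^[k] X :=
    (iterate_step_mono H n X).directed_le.exists_mem_subset_of_finset_subset_biUnion hAX
  intro v hv
  refine Set.mem_iUnion.2 ⟨k + 1, ?_⟩
  rw [Function.iterate_succ_apply']
  exact common_subset_step H n _ A hA hk hv

lemma step_mono (H : SimpleGraph W) (n : ℕ) {X Y : Set W} (h : X ⊆ Y) :
    step H n X ⊆ step H n Y := by
  rintro v (hv | hv)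
  · exact Or.inl (h hv)
  · obtain ⟨A, hA⟩ := Set.mem_iUnion.1 hv
    refine common_subset_step H n Y _ (by rw [Finset.card_map, A.2]) ?_ hA
    intro x hx
    simp only [Finset.coe_map, Set.mem_image] at hx
    obtain ⟨y, -, rfl⟩ := hx
    exact h y.2

lemma hull_mono (H : SimpleGraph W) (n : ℕ) {X Y : Set W} (h : X ⊆ Y) :
    hull H n X ⊆ hull H n Y :=
  Set.iUnion_mono fun k => by
    induction k with
    | zero => exact h
    | succ k ih =>
      rw [Function.iterate_succ_apply', Function.iterate_succ_apply']
      exact step_mono H n ih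

lemma mk_step_le (H : SimpleGraph W) (n : ℕ)
    (hc : ∀ A : Finset W, A.card = n → (common H A).Countable)
    (c : Cardinal.{u}) (h0 : ℵ₀ ≤ c) (X : Set W) (hX : #X ≤ c) : #(step H n X) ≤ c := by
  classical
  have hfin : #(Finset X) ≤ c := by
    refine (mk_le_of_surjective (f := fun l : List X => l.toFinset) ?_).trans
      ((mk_list_le_max X).trans (max_le h0 hX))
    exact fun s => ⟨s.toList, Finset.toList_toFinset s⟩
  refine (mk_union_le _ _).trans (add_le_of_le h0 hX ?_)
  refine (mk_iUnion_le _).trans (mul_le_of_le h0 ((mk_subtype_le _).trans hfin) ?_)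
  refine ciSup_le' fun A => (le_aleph0_iff_set_countable.2 (hc _ ?_)).trans h0
  rw [Finset.card_map, A.2]

lemma mk_hull_le (H : SimpleGraph W) (n : ℕ)
    (hc : ∀ A : Finset W, A.card = n → (common H A).Countable)
    (c : Cardinal.{u}) (h0 : ℵ₀ ≤ c) (X : Set W) (hX : #X ≤ c) : #(hull H n X) ≤ c := by
  have hk : ∀ k : ℕ, #((step H n)^[k] X : Set W) ≤ c := by
    intro k
    induction k with
    | zero => exact hX
    | succ k ih =>
      rw [Function.iterate_succ_apply']
      exact mk_step_le H n hc c h0 _ ih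
  have := mk_iUnion_le_lift (fun k : ℕ => (step H n)^[k] X)
  simp only [lift_uzero, mk_nat, lift_aleph0] at this
  exact this.trans (mul_le_of_le h0 h0 (ciSup_le' hk))

/-- `H` has an orientation by a well-founded relation with finitely many neighbours below each
vertex. The relation itself may also relate non-adjacent vertices. -/
def Orientable (H : SimpleGraph W) : Prop :=
  ∃ r : W → W → Prop, WellFounded r ∧ (∀ x y, H.Adj x y → r x y ∨ r y x) ∧
    ∀ v, {u | H.Adj u v ∧ r u v}.Finite

lemma orientable_of_countable [Countable W] (H : SimpleGraph W) : Orientable H := by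
  obtain ⟨e, he⟩ := exists_injective_nat W
  refine ⟨InvImage (· < ·) e, InvImage.wf e wellFounded_lt, fun x y hxy => ?_, fun v => ?_⟩
  · exact lt_or_gt_of_ne fun h => hxy.ne (he h)
  · exact ((Set.finite_Iio (e v)).preimage he.injOn).subset fun u hu => hu.2

/-- Orientations of the graphs induced on an increasing family of closed sets `C s` covering the
vertices combine into an orientation of the whole graph. -/
lemma orientable_of_chain (H : SimpleGraph W) (n : ℕ) {I : Type u} [LinearOrder I]
    [WellFoundedLT I] (C : I → Set W) (hmono : Monotone C) (hcov : ∀ v, ∃ s, v ∈ C s)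
    (hclosed : ∀ s, ∀ A : Finset W, A.card = n → (A : Set W) ⊆ C s → common H A ⊆ C s)
    (hor : ∀ s, Orientable (H.induce (C s))) : Orientable H := by
  classical
  choose r hwf htot hfin using hor
  -- `rk v` is the least `s` with `v ∈ C s`
  have hrk : ∀ v, ∃ s, v ∈ C s ∧ ∀ t, t < s → v ∉ C t := fun v =>
    ⟨wellFounded_lt.min {s | v ∈ C s} (hcov v), wellFounded_lt.min_mem _ (hcov v),
      fun t ht hv => wellFounded_lt.not_lt_min {s | v ∈ C s} hv ht⟩
  choose rk hmem hmin using hrk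
  let F : W → Σ' s : I, C s := fun v => ⟨rk v, v, hmem v⟩
  have hlex : ∀ u v, PSigma.Lex (· < ·) r (F u) (F v) ↔
      rk u < rk v ∨ ∃ h : rk u = rk v, r (rk v) ⟨u, h ▸ hmem u⟩ ⟨v, hmem v⟩ := by
    intro u v
    rw [PSigma.lex_iff]
    refine or_congr Iff.rfl ?_
    have key : ∀ (s t : I) (a : C s) (b : C t) (h : s = t),
        (h ▸ a : C t) = ⟨a.1, h ▸ a.2⟩ := by
      rintro s t a b rfl; rfl
    constructor
    · rintro ⟨h, hr⟩
      refine ⟨h, ?_⟩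
      have := key _ _ (F u).2 (F v).2 h
      rw [this] at hr
      exact hr
    · rintro ⟨h, hr⟩
      refine ⟨h, ?_⟩
      have := key _ _ (F u).2 (F v).2 h
      rw [this]
      exact hr
  refine ⟨InvImage (PSigma.Lex (· < ·) r) F,
    InvImage.wf F (WellFounded.psigma_lex wellFounded_lt hwf), fun x y hxy => ?_, fun v => ?_⟩
  · simp only [InvImage, hlex]
    rcases lt_trichotomy (rk x) (rk y) with h | h | h
    · exact Or.inl (Or.inl h)
    · have hx : x ∈ C (rk y) := h ▸ hmem x
      rcases htot (rk y) ⟨x, hx⟩ ⟨y, hmem y⟩ hxy with h' | h'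
      · exact Or.inl (Or.inr ⟨h, h'⟩)
      · refine Or.inr (Or.inr ⟨h.symm, ?_⟩)
        have aux : ∀ s (e : rk y = s) (hx' : x ∈ C s),
            r s ⟨y, e ▸ hmem y⟩ ⟨x, hx'⟩ := by
          rintro s rfl hx'; exact h'
        exact aux _ h.symm _
    · exact Or.inr (Or.inl h)
  · have h1 : {u | H.Adj u v ∧ rk u < rk v}.Finite := by
      by_contra hinf
      obtain ⟨A, hA, hcard⟩ := Set.Infinite.exists_subset_card_eq hinf n
      obtain ⟨u₀, hu₀⟩ := Set.Infinite.nonempty hinf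
      -- the vertex `u₀` supplies a bound also when `A` is empty
      have hne : (insert u₀ A).Nonempty := Finset.insert_nonempty _ _
      obtain ⟨w, hw, hmax⟩ := Finset.exists_max_image (insert u₀ A) rk hne
      have hwv : rk w < rk v := by
        rcases Finset.mem_insert.1 hw with rfl | hw
        · exact hu₀.2
        · exact (hA hw).2
      refine hmin v _ hwv (hclosed (rk w) A hcard ?_ fun a ha => (hA ha).1)
      exact fun a ha => hmono (hmax a (Finset.mem_insert_of_mem ha)) (hmem a)
    refine (h1.union ((hfin (rk v) ⟨v, hmem v⟩).image Subtype.val)).subset ?_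
    rintro u ⟨hadj, hu⟩
    simp only [InvImage, hlex] at hu
    rcases hu with hu | ⟨h, hu⟩
    · exact Or.inl ⟨hadj, hu⟩
    · exact Or.inr ⟨⟨u, h ▸ hmem u⟩, ⟨hadj, hu⟩, rfl⟩

lemma exists_orientation (n : ℕ) (c : Cardinal.{u}) : ∀ (W : Type u) (H : SimpleGraph W),
    #W = c → (∀ A : Finset W, A.card = n → (common H A).Countable) → Orientable H := by
  induction c using WellFoundedLT.induction with
  | ind c ih =>
  intro W H hW hc
  rcases le_or_gt #W ℵ₀ with hle | hgt
  · have : Countable W := mk_le_aleph0_iff.1 hle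
    exact orientable_of_countable H
  · obtain ⟨_, _, hord⟩ := exists_ord_eq_type_lt W
    refine orientable_of_chain H n (fun s => hull H n (Set.Iic s))
      (fun s t hst => hull_mono H n (Set.Iic_subset_Iic.2 hst))
      (fun v => ⟨v, subset_hull H n _ (Set.mem_Iic.2 le_rfl)⟩)
      (fun s A hA hs => common_subset_hull H n _ A hA hs) fun s => ?_
    have hlt : #(Set.Iio s) < #W := mk_Iio_lt s hord
    have hmax : max ℵ₀ #(Set.Iio s) < #W := max_lt hgt hlt
    have hIic : #(Set.Iic s) ≤ max ℵ₀ #(Set.Iio s) := by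
      rw [← Set.Iio_insert]
      exact mk_insert_le.trans (add_le_of_le (le_max_left _ _) (le_max_right _ _)
        (one_le_aleph0.trans (le_max_left _ _)))
    have hsmall := (mk_hull_le H n hc _ (le_max_left _ _) _ hIic).trans_lt hmax
    refine ih _ (hW ▸ hsmall) _ (H.induce _) rfl fun A hA => ?_
    refine Set.Countable.mono ?_ ((hc (A.map (Function.Embedding.subtype _))
      (by rw [Finset.card_map, hA])).preimage_of_injOn Subtype.val_injective.injOn)
    intro v hv a ha
    obtain ⟨b, hb, rfl⟩ := Finset.mem_map.1 ha
    exact hv b hb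

/-- Greedy colouring: each vertex avoids the finitely many colours of its neighbours below it. -/
lemma exists_coloring (H : SimpleGraph W) (hH : Orientable H) :
    ∃ f : W → ℕ, ∀ x y, H.Adj x y → f x ≠ f y := by
  obtain ⟨r, hwf, htot, hfin⟩ := hH
  have hex : ∀ (v : W) (g : ∀ u, r u v → ℕ), ∃ m : ℕ, ∀ u (hu : r u v), H.Adj u v → g u hu ≠ m := by
    intro v g
    have : Finite {u | H.Adj u v ∧ r u v} := hfin v
    obtain ⟨m, hm⟩ := (Set.finite_range
      fun u : {u | H.Adj u v ∧ r u v} => g u.1 u.2.2).exists_notMem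
    exact ⟨m, fun u hu hadj h => hm ⟨⟨u, hadj, hu⟩, h⟩⟩
  choose m hm using hex
  have key : ∀ x y, H.Adj x y → r x y → hwf.fix m x ≠ hwf.fix m y := by
    intro x y hxy hr
    rw [hwf.fix_eq m y]
    exact hm y (fun u _ => hwf.fix m u) x hr hxy
  refine ⟨hwf.fix m, fun x y hxy => ?_⟩
  rcases htot x y hxy with hr | hr
  · exact key x y hxy hr
  · exact (key y x hxy.symm hr).symm

end ErdosHajnal

/-- **Erdős–Hajnal.** If a graph `G` has no proper colouring with countably many colours,
then for every natural number `n` it contains a complete bipartite subgraph `K_{n, ℵ₁}`. -/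
theorem erdos_hajnal_K_n_aleph_one {V : Type u} (G : SimpleGraph V)
    (h : ∀ f : V → ℕ, ∃ x y, G.Adj x y ∧ f x = f y) (n : ℕ) :
    ∃ A B : Set V, Disjoint A B ∧
      Cardinal.mk A = n ∧
      Cardinal.mk B = Cardinal.aleph 1 ∧
      ∀ a ∈ A, ∀ b ∈ B, G.Adj a b := by
  by_contra hno
  have hc : ∀ A : Finset V, A.card = n → (ErdosHajnal.common G A).Countable := by
    intro A hA
    by_contra hunc
    have hle : Cardinal.aleph 1 ≤ Cardinal.mk (ErdosHajnal.common G A) := by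
      rw [← Cardinal.le_aleph0_iff_set_countable, not_le] at hunc
      rw [← Cardinal.succ_aleph0]
      exact Order.succ_le_of_lt hunc
    obtain ⟨B, hB, hBcard⟩ := Cardinal.le_mk_iff_exists_subset.1 hle
    refine hno ⟨A, B, ?_, ?_, hBcard, fun a ha b hb => hB hb a ha⟩
    · exact Set.disjoint_left.2 fun a ha hb => G.irrefl (hB hb a ha)
    · rw [← hA]; exact Cardinal.mk_coe_finset
  obtain ⟨f, hf⟩ := ErdosHajnal.exists_coloring G
    (ErdosHajnal.exists_orientation n _ V G rfl hc)
  obtain ⟨x, y, hxy, he⟩ := h f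
  exact hf x y hxy he
end

section
/- Every simple graph G that admits no proper vertex colouring with countably many colours contains odd cycles of all sufficiently large lengths: there exists a natural number N such that for every odd integer m ≥ N, G contains a cycle of length m. -/
/-!
Grow a breadth-first forest in `G`, with depth function `f` and parent map `p`. Countably many
layers `{f = n}` cover `V`, and distinct trees lie in distinct components, so some layer of some
tree induces a graph of uncountable chromatic number. Inside that layer choose the least `k` such
that, for some vertex `a`, the set `S` of vertices of the layer whose `k`-th ancestor is `a` still
induces an uncountably chromatic graph. By minimality each branch `{p^[k-1] = b}` of `S` is
countably chromatic, so the graph `H` of those edges of `G[S]` that join different branches is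
uncountably chromatic (`exists_branching`).

By compactness `H` has finite nonempty subgraphs of arbitrarily large minimum degree
(`exists_finset_minDegree`), and in such a subgraph there are, for every odd `l`, paths of length
`l` whose ends lie in different branches (`exists_path_ne`): otherwise all neighbours of any vertex
would lie in one branch, so that branches alternate between two values along every path, and the
ends of an odd path would differ after all. The tree path through `a` joining two vertices of `S`
in different branches has length `2 * k` and meets the layer only in its ends
(`exists_tree_path`), so it closes the path up to a cycle of length `l + 2 * k`.
-/

universe u

namespace OddCycles

variable {V : Type u}

/-- The subgraph of `G` induced on `S` has a proper colouring with countably many colours. -/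
def CountablyColorableOn (G : SimpleGraph V) (S : Set V) : Prop :=
  ∃ c : V → ℕ, ∀ x ∈ S, ∀ y ∈ S, G.Adj x y → c x ≠ c y

/-! ### The breadth-first forest -/

/-- A breadth-first forest: a depth function `f` and a parent map `p`, with one root (vertex of
depth zero) in each component. -/
lemma exists_forest (G : SimpleGraph V) :
    ∃ (f : V → ℕ) (p : V → V),
      (∀ x, f x ≠ 0 → G.Adj x (p x) ∧ f (p x) + 1 = f x) ∧
      (∀ x y, G.Reachable x y → f x = 0 → f y = 0 → x = y) := by
  classical
  let r : V → V := fun x => (G.connectedComponentMk x).out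
  have hr : ∀ x, G.Reachable x (r x) := fun x =>
    (SimpleGraph.ConnectedComponent.exact (Quot.out_eq (G.connectedComponentMk x))).symm
  have hrr : ∀ x y, G.Reachable x y → r x = r y := fun x y h => by
    simp only [r, SimpleGraph.ConnectedComponent.sound h]
  have key : ∀ x, ∃ z, G.dist x (r x) ≠ 0 →
      G.Adj x z ∧ G.dist z (r z) + 1 = G.dist x (r x) := by
    intro x
    by_cases h0 : G.dist x (r x) = 0
    · exact ⟨x, fun h => absurd h0 h⟩
    obtain ⟨w, hw⟩ := (hr x).exists_walk_length_eq_dist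
    rw [← hw] at h0 ⊢
    generalize hq : r x = q at w hw h0
    cases w with
    | nil => simp at h0
    | @cons _ z _ hxz w' =>
      refine ⟨z, fun _ => ⟨hxz, ?_⟩⟩
      have hz : r z = q := by rw [← hq]; exact (hrr _ _ hxz.reachable).symm
      rw [hz]
      have h1 := SimpleGraph.dist_le w'
      obtain ⟨w2, hw2⟩ := w'.reachable.exists_walk_length_eq_dist
      have h2 := SimpleGraph.dist_le (SimpleGraph.Walk.cons hxz w2)
      simp only [SimpleGraph.Walk.length_cons] at *
      omega
  choose p hp using key
  refine ⟨fun x => G.dist x (r x), p, hp, ?_⟩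
  intro x y hxy hx hy
  have h1 := (hr x).dist_eq_zero_iff.1 hx
  have h2 := (hr y).dist_eq_zero_iff.1 hy
  rw [h1, h2, hrr x y hxy]

/-- Two vertices of depth `n` whose ancestors first agree `k + 1` steps up are joined by a path
of length `2 * (k + 1)` whose inner vertices have smaller depth. -/
lemma exists_tree_path {G : SimpleGraph V} {f : V → ℕ} {p : V → V}
    (hp : ∀ x, f x ≠ 0 → G.Adj x (p x) ∧ f (p x) + 1 = f x) (k : ℕ) :
    ∀ (n : ℕ) (x y : V), k + 1 ≤ n → f x = n → f y = n → p^[k + 1] x = p^[k + 1] y →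
      p^[k] x ≠ p^[k] y →
      ∃ w : G.Walk x y, w.IsPath ∧ w.length = 2 * (k + 1) ∧
        ∀ v ∈ w.support, v = x ∨ v = y ∨ f v < n := by
  induction k with
  | zero =>
    intro n x y hn hx hy h1 h0
    have h1 : p x = p y := h1
    have h0 : x ≠ y := h0
    obtain ⟨ax, fx⟩ := hp x (by omega)
    obtain ⟨ay, fy⟩ := hp y (by omega)
    rw [← h1] at ay
    refine ⟨.cons ax (.cons ay.symm .nil), ?_, rfl, ?_⟩
    · have := ax.ne
      have := ay.ne
      simp [SimpleGraph.Walk.isPath_def]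
      grind
    · simp
      omega
  | succ k ih =>
    intro n x y hn hx hy h1 h0
    obtain ⟨ax, fx⟩ := hp x (by omega)
    obtain ⟨ay, fy⟩ := hp y (by omega)
    obtain ⟨w, hw, hl, hs⟩ := ih (n - 1) (p x) (p y) (by omega) (by omega) (by omega) h1 h0
    have hlt : ∀ v ∈ w.support, f v < n := by
      intro v hv
      rcases hs v hv with rfl | rfl | h <;> omega
    have hxy : x ≠ y := fun h => h0 (by rw [h])
    refine ⟨.cons ax (w.concat ay.symm), ?_, ?_, ?_⟩
    · rw [SimpleGraph.Walk.cons_isPath_iff, SimpleGraph.Walk.concat_isPath_iff]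
      refine ⟨⟨hw, fun h => ?_⟩, fun h => ?_⟩
      · have := hlt y h
        omega
      · rw [SimpleGraph.Walk.support_concat] at h
        simp at h
        rcases h with h | h
        · have := hlt x h
          omega
        · exact hxy h
    · simp [hl]
      ring
    · intro v hv
      simp [SimpleGraph.Walk.support_concat] at hv
      rcases hv with h | h | h
      · exact .inl h
      · exact .inr (.inr (hlt v h))
      · exact .inr (.inl h)

/-- In a graph of uncountable chromatic number, some layer of the forest contains an uncountably
chromatic set with common `(k + 1)`-st ancestor `a` all of whose branches `{p^[k] = b}` are
countably chromatic. -/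
lemma exists_branching {G : SimpleGraph V} {f : V → ℕ} {p : V → V}
    (hp : ∀ x, f x ≠ 0 → G.Adj x (p x) ∧ f (p x) + 1 = f x)
    (hroot : ∀ x y, G.Reachable x y → f x = 0 → f y = 0 → x = y)
    (hG : ¬ CountablyColorableOn G Set.univ) :
    ∃ (n k : ℕ) (a : V), k + 1 ≤ n ∧
      ¬ CountablyColorableOn G {x | f x = n ∧ p^[k + 1] x = a} ∧
      ∀ b, CountablyColorableOn G {x | f x = n ∧ p^[k] x = b} := by
  classical
  obtain ⟨n, hn⟩ : ∃ n, ¬ CountablyColorableOn G {x | f x = n} := by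
    by_contra! hcon
    choose c hc using hcon
    refine hG ⟨fun x => Nat.pair (f x) (c (f x) x), fun x _ y _ hxy h => ?_⟩
    obtain ⟨h1, h2⟩ := Nat.pair_eq_pair.1 h
    exact hc (f x) x rfl y h1.symm hxy (by rw [h2, h1])
  have hiter : ∀ i x, i ≤ f x → G.Reachable x (p^[i] x) ∧ f (p^[i] x) + i = f x := by
    intro i
    induction i with
    | zero => intro x _; exact ⟨.refl _, rfl⟩
    | succ i ih =>
      intro x hx
      obtain ⟨ax, fx⟩ := hp x (by omega)
      obtain ⟨h1, h2⟩ := ih (p x) (by omega)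
      rw [Function.iterate_succ_apply]
      exact ⟨ax.reachable.trans h1, by omega⟩
  have htree : ∃ a, ¬ CountablyColorableOn G {x | f x = n ∧ p^[n] x = a} := by
    by_contra! hcon
    choose c hc using hcon
    refine hn ⟨fun x => c (p^[n] x) x, fun x (hx : f x = n) y (hy : f y = n) hxy h => ?_⟩
    obtain ⟨hx1, hx2⟩ := hiter n x hx.ge
    obtain ⟨hy1, hy2⟩ := hiter n y hy.ge
    have hr : p^[n] x = p^[n] y :=
      hroot _ _ (hx1.symm.trans (hxy.reachable.trans hy1)) (by omega) (by omega)
    have h : c (p^[n] x) x = c (p^[n] y) y := h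
    rw [← hr] at h
    exact hc _ x ⟨hx, rfl⟩ y ⟨hy, hr.symm⟩ hxy h
  have hex : ∃ k, ∃ a, ¬ CountablyColorableOn G {x | f x = n ∧ p^[k] x = a} := ⟨n, htree⟩
  have hle : Nat.find hex ≤ n := Nat.find_min' hex htree
  have hspec := Nat.find_spec hex
  have hmin := fun k => @Nat.find_min _ _ hex k
  generalize Nat.find hex = k at hle hspec hmin
  obtain ⟨a, ha⟩ := hspec
  cases k with
  | zero =>
    refine absurd ⟨fun _ => 0, fun x hx y hy hxy => ?_⟩ ha
    exact absurd (hx.2.trans hy.2.symm) hxy.ne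
  | succ k =>
    refine ⟨n, k, a, hle, ha, fun b => ?_⟩
    have := hmin k (Nat.lt_succ_self k)
    push Not at this
    exact this b

/-! ### Subgraphs of large minimum degree -/

open Classical in
/-- A graph of uncountable chromatic number has finite nonempty subgraphs of arbitrarily large
minimum degree. Otherwise, for some `d`, every finite subgraph is coloured greedily with `d + 1`
colours, and by compactness so is the whole graph. -/
lemma exists_finset_minDegree (H : SimpleGraph V) (hH : ¬ CountablyColorableOn H Set.univ)
    (d : ℕ) : ∃ W : Finset V, W.Nonempty ∧ ∀ x ∈ W, d ≤ (W.filter (H.Adj x)).card := by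
  by_contra! hcon
  have hfin : ∀ W : Finset V, ∃ c : V → Fin (d + 1),
      ∀ x ∈ W, ∀ y ∈ W, H.Adj x y → c x ≠ c y := by
    intro W
    induction W using Finset.strongInduction with
    | H W ih =>
      rcases W.eq_empty_or_nonempty with rfl | hne
      · exact ⟨fun _ => 0, by simp⟩
      obtain ⟨x, hx, hdeg⟩ := hcon W hne
      obtain ⟨c, hc⟩ := ih (W.erase x) (Finset.erase_ssubset hx)
      obtain ⟨i, hi⟩ : ∃ i, i ∉ (W.filter (H.Adj x)).image c := by
        by_contra! hall
        have h1 : (Finset.univ : Finset (Fin (d + 1))).card ≤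
            ((W.filter (H.Adj x)).image c).card := Finset.card_le_card fun i _ => hall i
        have h2 := Finset.card_image_le (s := W.filter (H.Adj x)) (f := c)
        simp only [Finset.card_univ, Fintype.card_fin] at h1
        omega
      have hi : ∀ y ∈ W, H.Adj x y → c y ≠ i := by
        intro y hy hxy h
        exact hi (Finset.mem_image.2 ⟨y, Finset.mem_filter.2 ⟨hy, hxy⟩, h⟩)
      refine ⟨Function.update c x i, fun y hy z hz hyz => ?_⟩
      by_cases hyx : y = x
      · subst hyx
        rw [Function.update_self, Function.update_of_ne hyz.ne']
        exact (hi z hz hyz).symm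
      · rw [Function.update_of_ne hyx]
        by_cases hzx : z = x
        · subst hzx
          rw [Function.update_self]
          exact hi y hy hyz.symm
        · rw [Function.update_of_ne hzx]
          exact hc y (Finset.mem_erase.2 ⟨hyx, hy⟩) z (Finset.mem_erase.2 ⟨hzx, hz⟩) hyz
  obtain ⟨g⟩ := SimpleGraph.nonempty_hom_of_forall_finite_subgraph_hom (G := H)
    (F := (⊤ : SimpleGraph (Fin (d + 1)))) (fun G' hG' => by
      choose c hc using hfin
      refine ⟨fun v => c hG'.toFinset v, fun {a b} hab => ?_⟩
      exact hc _ a (by simp) b (by simp) (G'.adj_sub hab))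
  exact hH ⟨fun x => g x, fun x _ y _ hxy h => (g.map_adj hxy).ne (Fin.ext h)⟩

open Classical in
/-- Inside a set of minimum degree at least `d`, a path of length `l` can be grown greedily from
any vertex so as to avoid a given small set. -/
lemma exists_path_avoiding {H : SimpleGraph V} {W : Finset V} {d : ℕ}
    (hW : ∀ x ∈ W, d ≤ (W.filter (H.Adj x)).card) (l : ℕ) :
    ∀ (F : Finset V) (x : V), x ∈ W → x ∉ F → F.card + l ≤ d →
      ∃ (y : V) (w : H.Walk x y), w.IsPath ∧ w.length = l ∧
        ∀ v ∈ w.support, v ∈ W ∧ v ∉ F := by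
  induction l with
  | zero => exact fun F x hx hF _ => ⟨x, .nil, by simp, rfl, by simp [hx, hF]⟩
  | succ l ih =>
    intro F x hx hF hcard
    obtain ⟨z, hz, hzF⟩ : ∃ z ∈ W.filter (H.Adj x), z ∉ F :=
      Finset.exists_mem_notMem_of_card_lt_card (by have := hW x hx; omega)
    obtain ⟨hzW, hxz⟩ := Finset.mem_filter.1 hz
    obtain ⟨y, w, hw, hl, hs⟩ := ih (insert x F) z hzW
      (by simp [hzF, hxz.ne']) (by rw [Finset.card_insert_of_notMem hF]; omega)
    refine ⟨y, .cons hxz w, ?_, by simp [hl], ?_⟩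
    · rw [SimpleGraph.Walk.cons_isPath_iff]
      exact ⟨hw, fun h => (hs x h).2 (Finset.mem_insert_self _ _)⟩
    · intro v hv
      rw [SimpleGraph.Walk.support_cons, List.mem_cons] at hv
      rcases hv with rfl | hv
      · exact ⟨hx, hF⟩
      · exact ⟨(hs v hv).1, fun h => (hs v hv).2 (Finset.mem_insert_of_mem h)⟩

/-- If `b` is constant on the neighbours in `W` of each vertex of `W`, then it agrees at the ends
of any walk of even length inside `W`. -/
lemma eq_of_even_walk {H : SimpleGraph V} {W : Finset V} {β : Type*} {b : V → β}
    (hb : ∀ y ∈ W, ∀ x ∈ W, ∀ z ∈ W, H.Adj y x → H.Adj y z → b x = b z) (j : ℕ) :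
    ∀ (x y : V) (w : H.Walk x y), w.length = 2 * j → (∀ v ∈ w.support, v ∈ W) → b x = b y := by
  induction j with
  | zero =>
    intro x y w hl _
    rw [SimpleGraph.Walk.eq_of_length_eq_zero hl]
  | succ j ih =>
    intro x y w hl hs
    match w with
    | .nil => simp at hl
    | .cons h .nil => simp at hl; omega
    | .cons (v := u) h (.cons (v := v) h' w') =>
      have h1 := ih v y w' (by simp at hl; omega) fun t ht => hs t (by simp [ht])
      rw [← h1]
      exact hb u (hs u (by simp)) x (hs x (by simp)) v (hs v (by simp)) h.symm h'

open Classical in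
/-- For a proper colouring `b` of a graph of uncountable chromatic number, there are paths of any
odd length whose ends have different `b`-values. -/
lemma exists_path_ne (H : SimpleGraph V) (hH : ¬ CountablyColorableOn H Set.univ)
    {β : Type*} {b : V → β} (hb : ∀ x y, H.Adj x y → b x ≠ b y) (j : ℕ) :
    ∃ (x y : V) (w : H.Walk x y), w.IsPath ∧ w.length = 2 * j + 1 ∧ b x ≠ b y := by
  by_contra! hcon
  obtain ⟨W, ⟨x, hx⟩, hW⟩ := exists_finset_minDegree H hH (2 * j + 2)
  have hnbr : ∀ y ∈ W, ∀ x ∈ W, ∀ z ∈ W, H.Adj y x → H.Adj y z → b x = b z := by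
    intro y hy x hx z hz hyx hyz
    -- A common continuation of length `2 * j` from `y` compares `x` and `z` with its far end.
    obtain ⟨q, w, hw, hl, hs⟩ := exists_path_avoiding hW (2 * j) {x, z} y hy
      (by simp [hyx.ne, hyz.ne]) (by have := Finset.card_le_two (a := x) (b := z); omega)
    have h1 := hcon x q (.cons hyx.symm w)
      (by rw [SimpleGraph.Walk.cons_isPath_iff]; exact ⟨hw, fun h => (hs x h).2 (by simp)⟩)
      (by simp [hl])
    have h2 := hcon z q (.cons hyz.symm w)
      (by rw [SimpleGraph.Walk.cons_isPath_iff]; exact ⟨hw, fun h => (hs z h).2 (by simp)⟩)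
      (by simp [hl])
    rw [h1, h2]
  obtain ⟨q, w, hw, hl, hs⟩ := exists_path_avoiding hW (2 * j + 1) ∅ x hx (by simp) (by simp)
  have hend := hcon x q w hw hl
  cases w with
  | nil => simp at hl
  | @cons _ y _ hxy w' =>
    have := eq_of_even_walk hnbr j y q w' (by simpa using hl) fun v hv => (hs v (by simp [hv])).1
    exact hb x y hxy (by rw [hend, this])

end OddCycles

open OddCycles in
/-- **Erdős–Hajnal–Shelah.** Every graph with no proper colouring with countably many
colours contains odd cycles of all sufficiently large lengths. -/
theorem erdos_hajnal_shelah_odd_cycles {V : Type u} (G : SimpleGraph V)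
    (h : ∀ f : V → ℕ, ∃ x y, G.Adj x y ∧ f x = f y) :
    ∃ N : ℕ, ∀ m : ℕ, N ≤ m → Odd m →
      ∃ (x : V) (w : G.Walk x x), w.IsCycle ∧ w.length = m := by
  have hG : ¬ CountablyColorableOn G Set.univ := by
    rintro ⟨c, hc⟩
    obtain ⟨x, y, hxy, he⟩ := h c
    exact hc x trivial y trivial hxy he
  obtain ⟨f, p, hp, hroot⟩ := exists_forest G
  obtain ⟨n, k, a, hkn, ha, hbr⟩ := exists_branching hp hroot hG
  -- The edges inside `S = {f = n, p^[k + 1] = a}` that join different branches.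
  let H : SimpleGraph V :=
    { Adj := fun x y => G.Adj x y ∧ (f x = n ∧ p^[k + 1] x = a) ∧ (f y = n ∧ p^[k + 1] y = a) ∧
        p^[k] x ≠ p^[k] y
      symm := ⟨fun _ _ h => ⟨h.1.symm, h.2.2.1, h.2.1, h.2.2.2.symm⟩⟩
      loopless := ⟨fun _ h => h.1.ne rfl⟩ }
  have hHG : H ≤ G := fun _ _ h => h.1
  have hH : ¬ CountablyColorableOn H Set.univ := by
    rintro ⟨c, hc⟩
    choose e he using hbr
    refine ha ⟨fun x => Nat.pair (c x) (e (p^[k] x) x), fun x hx y hy hxy hxe => ?_⟩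
    obtain ⟨h1, h2⟩ := Nat.pair_eq_pair.1 hxe
    by_cases hb : p^[k] x = p^[k] y
    · rw [← hb] at h2
      exact he _ x ⟨hx.1, rfl⟩ y ⟨hy.1, hb.symm⟩ hxy h2
    · exact hc x trivial y trivial ⟨hxy, hx, hy, hb⟩ h1
  refine ⟨2 * (k + 1) + 1, fun m hm hodd => ?_⟩
  obtain ⟨i, rfl⟩ := hodd
  obtain ⟨x, y, w, hw, hl, hne⟩ := exists_path_ne H hH (b := p^[k]) (fun _ _ h => h.2.2.2)
    (i - (k + 1))
  have hsupp : ∀ v ∈ w.support, f v = n ∧ p^[k + 1] v = a := by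
    intro v hv
    have hnil : ¬ w.Nil := by
      rw [SimpleGraph.Walk.not_nil_iff_lt_length]
      omega
    obtain ⟨e, he, hve⟩ := (SimpleGraph.Walk.mem_support_iff_exists_mem_edges_of_not_nil hnil).1 hv
    obtain ⟨t, rfl⟩ := Sym2.mem_iff_exists.1 hve
    exact (w.adj_of_mem_edges he).2.1
  obtain ⟨hfx, hax⟩ := hsupp x w.start_mem_support
  obtain ⟨hfy, hay⟩ := hsupp y w.end_mem_support
  obtain ⟨q, hq, hql, hqs⟩ :=
    exists_tree_path hp k n y x hkn hfy hfx (hay.trans hax.symm) hne.symm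
  have hwG : (w.mapLe hHG).IsPath := by simpa using hw
  refine ⟨x, (w.mapLe hHG).append q, hwG.isCycle_append hq ?_ (.inr (by omega)), ?_⟩
  · intro v hv hv'
    have hvw : v ∈ w.support := by simpa using List.mem_of_mem_tail hv
    rcases hqs v (List.mem_of_mem_tail hv') with rfl | rfl | hlt
    · have := hq.support_nodup
      rw [← SimpleGraph.Walk.cons_tail_support] at this
      exact (List.nodup_cons.1 this).1 hv'
    · have := hwG.support_nodup
      rw [← SimpleGraph.Walk.cons_tail_support] at this
      exact (List.nodup_cons.1 this).1 hv
    · have := (hsupp v hvw).1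
      omega
  · simp [hl, hql]
    omega
end

section
/- For every finite simple graph F and every natural number r there exists a finite simple graph H such that for every colouring of the edges of H with r colours there is a monochromatic induced copy of F in H; that is, there is an injective map from V(F) to V(H) under which two vertices of F are adjacent in F if and only if their images are adjacent in H, and all edges of the image receive the same colour. -/
/-!
The proof is the partite construction of Nešetřil and Rödl.

Work with *partite graphs*: graphs `G` with a map `π` to a set `ρ` of parts such that adjacent
vertices lie in different parts. Write `G ⟶ G'` for a part-preserving induced embedding.

* Partite step (`partite_step`). Given `G` and two parts `i`, `j`, there is a partite graph `G'`
  such that for every colouring of `G'` some `G ⟶ G'` gives the same colour to all edges of `G`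
  between the parts `i` and `j`. Apply the Hales–Jewett theorem to the alphabet `E` of edges of `G`
  between `i` and `j`, obtaining a set `ι` of coordinates. Every combinatorial line `l` in `ι → E`
  yields a copy of the bipartite graph between `i` and `j` inside `ι → V`, and `G'` is obtained by
  gluing one copy of `G` along each of these (`lineEmb`). An edge between `i` and `j` over a word
  `w : ι → E` is coloured by a colour of `w`, so a monochromatic line gives the required copy.
* Iterating over all pairs of parts (`partite_iterate`) gives, for each `G`, a `G'` such that
  for every colouring of `G'` some `G ⟶ G'` makes the colour of an edge of `G` depend only on the
  pair of parts of its ends.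
* Start with `N` parts, `N` given by Ramsey's theorem (`ramsey_finset`) for cliques of size `|F|`,
  and with the disjoint union of copies of `F`, one for each injection of its vertices into the set
  of parts (`startGraph`). In the copy found, colours depend on pairs of parts only; Ramsey's
  theorem picks a set of `|F|` parts with a single colour, and the copy of `F` on these parts is
  monochromatic.
-/

/-! ### Ramsey's theorem for graphs -/

/-- Multicolour Ramsey theorem, with a prescribed clique size `k i` for each colour `i`. -/
lemma ramsey_finset (r : ℕ) (k : Fin r → ℕ) :
    ∃ N : ℕ, ∀ (ρ : Type) (χ : Sym2 ρ → Fin r) (S : Finset ρ), N ≤ S.card →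
      ∃ i, ∃ T ⊆ S, T.card = k i ∧ ∀ x ∈ T, ∀ y ∈ T, x ≠ y → χ s(x, y) = i := by
  classical
  induction hs : ∑ i, k i using Nat.strong_induction_on generalizing k with
  | _ s ih =>
  by_cases h0 : ∃ i, k i = 0
  · obtain ⟨i, hi⟩ := h0
    exact ⟨0, fun ρ χ S _ => ⟨i, ∅, by simp, by simp [hi], by simp⟩⟩
  push Not at h0
  have key : ∀ i, ∃ N : ℕ, ∀ (ρ : Type) (χ : Sym2 ρ → Fin r) (S : Finset ρ), N ≤ S.card →
      ∃ j, ∃ T ⊆ S, T.card = Function.update k i (k i - 1) j ∧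
        ∀ x ∈ T, ∀ y ∈ T, x ≠ y → χ s(x, y) = j := by
    intro i
    refine ih _ ?_ (Function.update k i (k i - 1)) rfl
    rw [← hs]
    refine Finset.sum_lt_sum (fun j _ => ?_) ⟨i, Finset.mem_univ _, ?_⟩
    · by_cases h : j = i
      · subst h; simp
      · simp [h]
    · have := h0 i
      simp only [Function.update_self]
      omega
  choose M hM using key
  refine ⟨1 + ∑ i, M i, fun ρ χ S hS => ?_⟩
  obtain ⟨v, hv⟩ : S.Nonempty := by
    rw [← Finset.card_pos]; omega
  have hcard : ∑ i, M i ≤ ∑ i, ((S.erase v).filter (fun x => χ s(v, x) = i)).card := by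
    rw [← Finset.card_eq_sum_card_fiberwise (f := fun x => χ s(v, x)) (fun x _ => by simp),
      Finset.card_erase_of_mem hv]
    omega
  obtain ⟨i, -, hi⟩ := Finset.exists_le_of_sum_le ⟨χ s(v, v), Finset.mem_univ _⟩ hcard
  obtain ⟨j, T, hTS, hTc, hT⟩ := hM i ρ χ _ hi
  have hTS' : ∀ x ∈ T, (x ≠ v ∧ x ∈ S) ∧ χ s(v, x) = i := fun x hx => by
    simpa using hTS hx
  by_cases hji : j = i
  · subst hji
    have hvT : v ∉ T := fun h => (hTS' v h).1.1 rfl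
    refine ⟨j, insert v T, ?_, ?_, ?_⟩
    · intro x hx
      rcases Finset.mem_insert.1 hx with rfl | hx
      · exact hv
      · exact (hTS' x hx).1.2
    · have := h0 j
      rw [Finset.card_insert_of_notMem hvT, hTc, Function.update_self]
      omega
    · intro x hx y hy hxy
      rcases Finset.mem_insert.1 hx with rfl | hx' <;>
        rcases Finset.mem_insert.1 hy with rfl | hy'
      · exact absurd rfl hxy
      · exact (hTS' y hy').2
      · rw [Sym2.eq_swap]; exact (hTS' x hx').2
      · exact hT x hx' y hy' hxy
  · exact ⟨j, T, fun x hx => (hTS' x hx).1.2, by simpa [hji] using hTc, hT⟩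

/-! ### The partite step -/

section Partite

open Combinatorics

variable {V ρ : Type} (G : SimpleGraph V) (π : V → ρ) (i j : ρ)

/-- The edges of `G` between the parts `i` and `j`, oriented from `i` to `j`. -/
abbrev EdgesBetween : Type :=
  {e : V × V // G.Adj e.1 e.2 ∧ π e.1 = i ∧ π e.2 = j}

open Classical in
/-- The end of the edge `e` lying in the same part as `v`, when `v` is in part `i` or `j`;
any other `v` is returned unchanged. -/
noncomputable def endIn (e : EdgesBetween G π i j) (v : V) : V :=
  if π v = i then e.1.1 else if π v = j then e.1.2 else v

open Classical in
/-- The copy of `G` attached to the combinatorial line `l`. The second component replaces `v` at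
every fixed coordinate of `l` by the end, in the part of `v`, of the edge standing there. The first
component is the tag `some l` outside the parts `i` and `j`, so that distinct copies
meet only in these two parts. -/
noncomputable def lineEmb {ι : Type} (l : Line (EdgesBetween G π i j) ι) (v : V) :
    Option (Line (EdgesBetween G π i j) ι) × (ι → V) :=
  (if π v = i ∨ π v = j then none else some l,
    fun t => (l.idxFun t).elim v (fun e => endIn G π i j e v))

variable {G π i j}

lemma part_endIn (e : EdgesBetween G π i j) (v : V) : π (endIn G π i j e v) = π v := by
  unfold endIn
  split_ifs with h1 h2
  · rw [h1]; exact e.2.2.1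
  · rw [h2]; exact e.2.2.2
  · rfl

lemma part_lineEmb {ι : Type} (l : Line (EdgesBetween G π i j) ι) (v : V) (t : ι) :
    π ((lineEmb G π i j l v).2 t) = π v := by
  simp only [lineEmb]
  cases l.idxFun t with
  | none => rfl
  | some e => exact part_endIn e v

lemma lineEmb_injective {ι : Type} (l : Line (EdgesBetween G π i j) ι) :
    Function.Injective (lineEmb G π i j l) := by
  intro u v h
  obtain ⟨t, ht⟩ := l.proper
  simpa [lineEmb, ht] using congrFun (congrArg Prod.snd h) t

/-- The copies of `G` attached to the lines are induced in their union: an edge of the copy for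
`l'` whose ends are images of `u` and `v` under the copy for `l` comes from an edge `u v`. -/
lemma adj_of_lineEmb_eq (hG : ∀ u v, G.Adj u v → π u ≠ π v) {ι : Type}
    {l l' : Line (EdgesBetween G π i j) ι} {u v u' v' : V} (hadj : G.Adj u' v')
    (hu : lineEmb G π i j l' u' = lineEmb G π i j l u)
    (hv : lineEmb G π i j l' v' = lineEmb G π i j l v) : G.Adj u v := by
  obtain ⟨t, ht⟩ := l.proper
  have pu : π u' = π u := by
    rw [← part_lineEmb l' u' t, hu, part_lineEmb l u t]
  have pv : π v' = π v := by
    rw [← part_lineEmb l' v' t, hv, part_lineEmb l v t]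
  -- If the two lines agree, injectivity of the copy suffices.
  have same : l' = l → G.Adj u v := by
    rintro rfl
    rw [← lineEmb_injective l' hu, ← lineEmb_injective l' hv]
    exact hadj
  by_cases hu1 : π u = i ∨ π u = j
  swap
  · exact same (by simpa [lineEmb, pu, hu1] using congrArg Prod.fst hu)
  by_cases hv1 : π v = i ∨ π v = j
  swap
  · exact same (by simpa [lineEmb, pv, hv1] using congrArg Prod.fst hv)
  have hu2 := congrFun (congrArg Prod.snd hu) t
  have hv2 := congrFun (congrArg Prod.snd hv) t
  simp only [lineEmb, ht, Option.elim_none] at hu2 hv2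
  -- At the moving coordinate `t` of `l`, the line `l'` either moves or carries an edge `e`,
  -- whose ends are then `u` and `v`.
  cases he : l'.idxFun t with
  | none =>
    simp only [he, Option.elim_none] at hu2 hv2
    rwa [← hu2, ← hv2]
  | some e =>
    simp only [he, Option.elim_some, endIn] at hu2 hv2
    rw [pu] at hu2
    rw [pv] at hv2
    have hne := hG _ _ hadj
    rw [pu, pv] at hne
    have hE := e.2.1
    by_cases a : π u = i
    · have b : π v ≠ i := fun b => hne (a.trans b.symm)
      have b' : π v = j := hv1.resolve_left b
      rw [if_pos a] at hu2
      rw [if_neg b, if_pos b'] at hv2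
      rwa [← hu2, ← hv2]
    · have a' : π u = j := hu1.resolve_left a
      have b : π v = i := hv1.resolve_right fun b => hne (a'.trans b.symm)
      rw [if_neg a, if_pos a'] at hu2
      rw [if_pos b] at hv2
      rw [← hu2, ← hv2]
      exact hE.symm

/-- Every colouring of a suitable partite graph `G'` admits a part-preserving induced copy of `G`
on which all edges between the two parts of `p` have the same colour. -/
lemma partite_step [Finite V] (hG : ∀ u v, G.Adj u v → π u ≠ π v) (r : ℕ) (hr : 0 < r)
    (p : Sym2 ρ) :
    ∃ (W : Type) (_ : Finite W) (G' : SimpleGraph W) (π' : W → ρ),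
      (∀ u v, G'.Adj u v → π' u ≠ π' v) ∧
      ∀ c : Sym2 W → Fin r, ∃ φ : V → W, Function.Injective φ ∧
        (∀ u v, G.Adj u v ↔ G'.Adj (φ u) (φ v)) ∧ (∀ v, π' (φ v) = π v) ∧
        ∃ col, ∀ u v, G.Adj u v → s(π u, π v) = p → c s(φ u, φ v) = col := by
  classical
  induction p using Sym2.ind with
  | _ i j =>
  obtain ⟨ι, hι, hHJ⟩ :=
    Line.exists_mono_in_high_dimension (EdgesBetween G π i j) (Fin r)
  -- A line has a moving coordinate, so there is at least one coordinate.
  obtain ⟨t₀⟩ : Nonempty ι := by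
    obtain ⟨l, -⟩ := hHJ (fun _ => ⟨0, hr⟩)
    obtain ⟨t, -⟩ := l.proper
    exact ⟨t⟩
  have hfin : Finite (Line (EdgesBetween G π i j) ι) :=
    Finite.of_injective (fun l => l.idxFun) (by
      rintro ⟨f, hf⟩ ⟨g, hg⟩ h
      simpa using h)
  let W := Option (Line (EdgesBetween G π i j) ι) × (ι → V)
  let π' : W → ρ := fun w => π (w.2 t₀)
  have hπ' : ∀ l v, π' (lineEmb G π i j l v) = π v := fun l v => part_lineEmb l v t₀
  let A : W → W → Prop := fun x y =>
    ∃ l u v, G.Adj u v ∧ lineEmb G π i j l u = x ∧ lineEmb G π i j l v = y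
  have hA : ∀ x y, A x y → π' x ≠ π' y := by
    rintro x y ⟨l, u, v, h, rfl, rfl⟩
    rw [hπ', hπ']
    exact hG u v h
  let G' : SimpleGraph W :=
    { Adj := A
      symm := ⟨by
        rintro x y ⟨l, u, v, h, hx, hy⟩
        exact ⟨l, v, u, h.symm, hy, hx⟩⟩
      loopless := ⟨fun x h => hA x x h rfl⟩ }
  refine ⟨W, inferInstance, G', π', hA, fun c => ?_⟩
  -- A word of edges is coloured like the edge of `G'` joining its words of first and second ends.
  obtain ⟨l, col, hl⟩ := hHJ (fun w =>
    c s((none, fun t => (w t).1.1), (none, fun t => (w t).1.2)))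
  have main : ∀ u v, G.Adj u v → π u = i → π v = j →
      c s(lineEmb G π i j l u, lineEmb G π i j l v) = col := by
    intro u v huv hu hv
    have hji : j ≠ i := fun h => hG u v huv (hu.trans (hv.trans h).symm)
    rw [← hl ⟨(u, v), huv, hu, hv⟩]
    congr 3
    · simp only [lineEmb, hu, true_or, if_true]
      congr 1
      funext t
      simp only [Line.coe_apply]
      cases l.idxFun t <;> simp [endIn, hu]
    · simp only [lineEmb, hv, or_true, if_true]
      congr 1
      funext t
      simp only [Line.coe_apply]
      cases l.idxFun t <;> simp [endIn, hji, hv]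
  refine ⟨lineEmb G π i j l, lineEmb_injective l, fun u v => ⟨fun h => ⟨l, u, v, h, rfl, rfl⟩, ?_⟩,
    hπ' l, col, fun u v huv huv' => ?_⟩
  · rintro ⟨l', u', v', h, hu, hv⟩
    exact adj_of_lineEmb_eq hG h hu hv
  · rcases Sym2.eq_iff.1 huv' with ⟨hu, hv⟩ | ⟨hu, hv⟩
    · exact main u v huv hu hv
    · rw [Sym2.eq_swap]
      exact main v u huv.symm hv hu

end Partite

/-! ### Iterating the partite step -/

/-- Every colouring of a suitable partite graph `G'` admits a part-preserving induced copy of `G`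
on which, for every `p ∈ S`, the edges between the two parts of `p` have a colour depending only
on `p`. -/
lemma partite_iterate {V ρ : Type} [Finite V] {G : SimpleGraph V} {π : V → ρ}
    (hG : ∀ u v, G.Adj u v → π u ≠ π v) (r : ℕ) (hr : 0 < r) (S : Finset (Sym2 ρ)) :
    ∃ (W : Type) (_ : Finite W) (G' : SimpleGraph W) (π' : W → ρ),
      (∀ u v, G'.Adj u v → π' u ≠ π' v) ∧
      ∀ c : Sym2 W → Fin r, ∃ φ : V → W, Function.Injective φ ∧
        (∀ u v, G.Adj u v ↔ G'.Adj (φ u) (φ v)) ∧ (∀ v, π' (φ v) = π v) ∧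
        ∀ p ∈ S, ∃ col, ∀ u v, G.Adj u v → s(π u, π v) = p → c s(φ u, φ v) = col := by
  classical
  induction S using Finset.induction_on with
  | empty =>
    exact ⟨V, inferInstance, G, π, hG, fun c => ⟨id, Function.injective_id, fun _ _ => Iff.rfl,
      fun _ => rfl, by simp⟩⟩
  | insert p S _ ih =>
    obtain ⟨W, hW, G', π', hG', h'⟩ := ih
    obtain ⟨X, hX, G'', π'', hG'', h''⟩ := partite_step hG' r hr p
    refine ⟨X, hX, G'', π'', hG'', fun c => ?_⟩
    obtain ⟨ψ, ψinj, ψadj, ψpart, ψcol⟩ := h'' c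
    obtain ⟨φ, φinj, φadj, φpart, φcol⟩ := h' (fun e => c (e.map ψ))
    refine ⟨ψ ∘ φ, ψinj.comp φinj, fun u v => (φadj u v).trans (ψadj _ _),
      fun v => (ψpart _).trans (φpart v), fun q hq => ?_⟩
    rcases Finset.mem_insert.1 hq with rfl | hq
    · obtain ⟨col, hcol⟩ := ψcol
      refine ⟨col, fun u v huv huv' => hcol _ _ ((φadj u v).1 huv) ?_⟩
      rw [φpart, φpart, huv']
    · exact φcol q hq

/-! ### The induced Ramsey theorem -/

/-- The disjoint union of copies of `F`, one for each injection `e` of its vertices into the set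
`ρ` of parts. The vertex `(e, a)` is meant to lie in part `e a`. -/
def startGraph {α : Type} (F : SimpleGraph α) (ρ : Type) : SimpleGraph ((α ↪ ρ) × α) where
  Adj x y := x.1 = y.1 ∧ F.Adj x.2 y.2
  symm := ⟨fun _ _ h => ⟨h.1.symm, h.2.symm⟩⟩
  loopless := ⟨fun _ h => h.2.ne rfl⟩

/-- **Induced Ramsey theorem** (Deuber; Erdős–Hajnal–Pósa; Rödl). For every finite graph `F`
and number of colours `r` there is a finite graph `H` such that every `r`-colouring of the
edges of `H` yields a monochromatic induced copy of `F`. -/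
theorem induced_ramsey {α : Type} [Fintype α] (F : SimpleGraph α) (r : ℕ) :
    ∃ (β : Type) (_ : Fintype β) (H : SimpleGraph β),
      ∀ c : Sym2 β → Fin r,
        ∃ f : α → β, Function.Injective f ∧
          (∀ u v : α, F.Adj u v ↔ H.Adj (f u) (f v)) ∧
          ∃ col : Fin r, ∀ u v : α, F.Adj u v → c s(f u, f v) = col := by
  classical
  rcases Nat.eq_zero_or_pos r with rfl | hr
  · -- A nonempty graph has no colouring with values in the empty type `Fin 0`.
    exact ⟨Unit, inferInstance, ⊥, fun c => (c s((), ())).elim0⟩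
  obtain ⟨N, hN⟩ := ramsey_finset r (fun _ => Fintype.card α)
  have hstart : ∀ x y, (startGraph F (Fin N)).Adj x y → x.1 x.2 ≠ y.1 y.2 := by
    rintro ⟨e, a⟩ ⟨e', b⟩ ⟨h, hab⟩ heq
    obtain rfl : e = e' := h
    exact hab.ne (e.injective heq)
  have : Finite (α ↪ Fin N) := inferInstance
  obtain ⟨W, hW, H, π', -, hH⟩ :=
    partite_iterate (π := fun x : (α ↪ Fin N) × α => x.1 x.2) hstart r hr Finset.univ
  refine ⟨W, Fintype.ofFinite W, H, fun c => ?_⟩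
  obtain ⟨φ, φinj, φadj, -, φcol⟩ := hH c
  choose χ hχ using fun p => φcol p (Finset.mem_univ p)
  obtain ⟨col, T, -, hTc, hT⟩ := hN (Fin N) χ Finset.univ (by simp)
  -- `e` places the vertices of `F` bijectively on the monochromatic set `T` of parts.
  let e₀ : α ≃ T := Fintype.equivOfCardEq (by simp [hTc])
  let e : α ↪ Fin N := e₀.toEmbedding.trans (Function.Embedding.subtype _)
  have heT : ∀ a, e a ∈ T := fun a => (e₀ a).2
  refine ⟨fun a => φ (e, a), fun a b h => (Prod.ext_iff.1 (φinj h)).2, fun u v => ?_, col,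
    fun u v huv => ?_⟩
  · rw [← φadj]
    exact ⟨fun h => ⟨rfl, h⟩, fun h => h.2⟩
  · rw [hχ s(e u, e v) (e, u) (e, v) ⟨rfl, huv⟩ rfl]
    exact hT _ (heT u) _ (heT v) fun h => huv.ne (e.injective h)
end
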